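/- arXiv:1210.1564 — 3 statements merged into one kernel-verified Lean document; each statement's English description precedes it below -/
import Mathlib

section
/- Let p be an odd prime, G a finite group, S a Sylow p-subgroup of G, and H a subgroup with S ≤ H ≤ G. Suppose that for all elementary abelian subgroups A, B ≤ S and every g ∈ G with gAg⁻¹ ≤ B, there exists h ∈ H with hxh⁻¹ = gxg⁻¹ for all x ∈ A. Then H controls p-fusion in G: for all subgroups P, Q ≤ S and every g ∈ G with gPg⁻¹ ≤ Q there exists h ∈ H with hxh⁻¹ = gxg⁻¹ for all x ∈ P. -/
theorem aux_center {p : ℕ} [Fact p.Prime] {Q : Type*} [Group Q] [Finite Q] (hQ : IsPGroup p Q)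
    (N : Subgroup Q) [N.Normal] (hN : N ≠ ⊥) : ∃ x ∈ N, x ≠ 1 ∧ ∀ y : Q, y * x * y⁻¹ = x := by
  have hQ' : IsPGroup p (ConjAct Q) := hQ.of_equiv ConjAct.toConjAct
  have hd : p ∣ Nat.card N := by
    rcases (hQ.to_subgroup N).card_eq_or_dvd with h | h
    · exact absurd (Subgroup.card_eq_one.mp h) hN
    · exact h
  have h1 : (1 : N) ∈ MulAction.fixedPoints (ConjAct Q) N := by
    intro g; exact smul_one g
  obtain ⟨b, hb, hne⟩ := hQ'.exists_fixed_point_of_prime_dvd_card_of_fixed_point N hd h1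
  refine ⟨b, b.2, ?_, ?_⟩
  · intro h; exact hne (Subtype.ext h.symm)
  · intro y
    have := congrArg Subtype.val (hb (ConjAct.toConjAct y))
    exact this

/-- coprime automorphism moving `x` to `x * n` with `n` fixed is trivial at `x`. -/
theorem aux_coprime {p : ℕ} {P : Type*} [Group P] (hP : IsPGroup p P)
    (φ : MulAut P) (k : ℕ) (hk : Nat.Coprime p k) (hφ : φ ^ k = 1) (x : P)
    (h : φ (x⁻¹ * φ x) = x⁻¹ * φ x) : φ x = x := by
  set n := x⁻¹ * φ x with hn
  have hx : φ x = x * n := by simp [hn]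
  have key : ∀ j : ℕ, (φ ^ j) x = x * n ^ j := by
    intro j
    induction j with
    | zero => simp
    | succ j ih =>
      rw [pow_succ', MulAut.mul_apply, ih, map_mul, map_pow, h, hx, pow_succ', mul_assoc]
  have h2 := key k
  rw [hφ] at h2
  have h3 : n ^ k = 1 := by simpa using h2
  have h4 : orderOf n ∣ k := orderOf_dvd_of_pow_eq_one h3
  have h5 := hP.orderOf_coprime hk n
  have h6 : orderOf n = 1 := Nat.eq_one_of_dvd_coprimes h5 dvd_rfl h4
  rw [orderOf_eq_one_iff] at h6
  rw [hx, h6, mul_one]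

theorem aux_class_two {P : Type*} [Group P] (x y c : P) (h : y * x = x * y * c)
    (hx : c * x = x * c) (hy : c * y = y * c) (k : ℕ) :
    (x * y) ^ k = x ^ k * y ^ k * c ^ (k.choose 2) := by
  have hcx : Commute c x := hx
  have hcy : Commute c y := hy
  have h1 : ∀ k : ℕ, y ^ k * x = x * y ^ k * c ^ k := by
    intro k
    induction k with
    | zero => simp
    | succ k ih =>
      calc y ^ (k+1) * x = y ^ k * (y * x) := by rw [pow_succ, mul_assoc]
        _ = (y ^ k * x) * y * c := by rw [h]; simp only [mul_assoc]
        _ = x * y ^ k * (c ^ k * y) * c := by rw [ih]; simp only [mul_assoc]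
        _ = x * y ^ k * (y * c ^ k) * c := by rw [(hcy.pow_left k).eq]
        _ = x * y ^ (k+1) * c ^ (k+1) := by rw [pow_succ y, pow_succ c]; simp only [mul_assoc]
  induction k with
  | zero => simp
  | succ k ih =>
    have e : (k+1).choose 2 = k + k.choose 2 := by
      rw [Nat.choose_succ_succ' k 1]; simp
    have hcc : Commute (c ^ (k.choose 2)) (x * y) := (hcx.mul_right hcy).pow_left _
    calc (x*y)^(k+1) = x ^ k * y ^ k * (c ^ (k.choose 2) * (x * y)) := by
          rw [pow_succ, ih]; simp only [mul_assoc]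
      _ = x ^ k * (y ^ k * x) * (y * c ^ (k.choose 2)) := by rw [hcc.eq]; simp only [mul_assoc]
      _ = x ^ k * x * y ^ k * (c ^ k * y) * c ^ (k.choose 2) := by rw [h1]; simp only [mul_assoc]
      _ = x ^ k * x * y ^ k * (y * c ^ k) * c ^ (k.choose 2) := by rw [(hcy.pow_left k).eq]
      _ = _ := by rw [pow_succ x, pow_succ y, e, pow_add]; simp only [mul_assoc]

theorem aux_pow_mul {p : ℕ} [hpp : Fact p.Prime] (hp : Odd p) {P : Type*} [Group P] (x y : P)
    (h1 : ∀ z, (z = x ∨ z = y) → (y⁻¹ * x⁻¹ * y * x) * z = z * (y⁻¹ * x⁻¹ * y * x))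
    (hxp : x ^ p * y = y * x ^ p) : (x * y) ^ p = x ^ p * y ^ p := by
  set c := (y⁻¹ * x⁻¹ * y * x) with hc
  have h : y * x = x * y * c := by rw [hc]; group
  have hcx : Commute c x := h1 x (.inl rfl)
  have hcy : Commute c y := h1 y (.inr rfl)
  have hcp : c ^ p = 1 := by
    have e : y * x * y⁻¹ = x * c := by rw [h, mul_assoc, mul_assoc, hcy.inv_right.eq]; group
    have e2 : (y * x * y⁻¹) ^ p = x ^ p := by
      rw [conj_pow, ← hxp]; group
    rw [e, hcx.symm.mul_pow] at e2
    simpa using e2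
  rw [aux_class_two x y c h hcx hcy]
  have hd : p ∣ p.choose 2 := by
    apply hpp.out.dvd_choose_self (by norm_num)
    rcases hp with ⟨m, hm⟩
    have := hpp.out.two_le
    omega
  obtain ⟨m, hm⟩ := hd
  rw [hm, pow_mul, hcp]; simp

/-- A proper Frattini-like subgroup. -/
theorem aux_frattini {p : ℕ} [hpp : Fact p.Prime] {P : Type*} [Group P] [Finite P] (hP : IsPGroup p P)
    (D : Subgroup P) (hD : D ≠ ⊥) : ∃ F : Subgroup P, F < D ∧ (∀ x ∈ D, x ^ p ∈ F) ∧
      (∀ x ∈ D, ∀ y ∈ D, x * y * x⁻¹ * y⁻¹ ∈ F) ∧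
      (∀ f : P →* P, (∀ x ∈ D, f x ∈ D) → ∀ x ∈ F, f x ∈ F) := by
  have hDp : IsPGroup p D := hP.to_subgroup D
  have : Nontrivial D := (Subgroup.nontrivial_iff_ne_bot D).mpr hD
  have : Group.IsNilpotent D := hDp.isNilpotent
  let F0 : Subgroup D := (powMonoidHom p : Abelianization D →* Abelianization D).range.comap
    Abelianization.of
  have hm : ∀ x : D, x ∈ F0 ↔ ∃ y : Abelianization D, y ^ p = Abelianization.of x := by
    intro x; simp [F0]
  refine ⟨F0.map D.subtype, ?_, ?_, ?_, ?_⟩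
  · refine lt_of_le_of_ne (Subgroup.map_subtype_le _) ?_
    intro h
    have htop : F0 = ⊤ := by
      rw [eq_top_iff]
      intro x _
      have : (x : P) ∈ F0.map D.subtype := by rw [h]; exact x.2
      obtain ⟨y, hy, hyx⟩ := this
      have : y = x := Subtype.ext hyx
      rwa [← this]
    have hsurj : Function.Surjective (powMonoidHom p : Abelianization D →* Abelianization D) := by
      intro z
      obtain ⟨x, rfl⟩ := QuotientGroup.mk_surjective z
      have : x ∈ F0 := by rw [htop]; trivial
      obtain ⟨y, hy⟩ := (hm x).mp this
      exact ⟨y, hy⟩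
    have hinj := Finite.injective_iff_surjective.mpr hsurj
    have hab : IsPGroup p (Abelianization D) :=
      hDp.of_surjective Abelianization.of QuotientGroup.mk_surjective
    have hntr : Nontrivial (Abelianization D) := by
      have hlt : commutator D < ⊤ := by
        exact Group.IsSolvable.commutator_lt_top_of_nontrivial D
      rw [← not_subsingleton_iff_nontrivial]
      intro hs
      apply hlt.ne
      exact QuotientGroup.subsingleton_iff.mp hs
    have hdvd : p ∣ Nat.card (Abelianization D) := by
      rcases hab.card_eq_or_dvd with h | h
      · exact absurd h Finite.one_lt_card.ne'
      · exact h
    obtain ⟨z, hz⟩ := exists_prime_orderOf_dvd_card' p hdvd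
    have : z = 1 := by
      apply hinj
      simp only [powMonoidHom_apply, one_pow]
      rw [← hz, pow_orderOf_eq_one]
    rw [this, orderOf_one] at hz
    exact hpp.out.one_lt.ne hz
  · intro x hx
    exact ⟨⟨x, hx⟩ ^ p, (hm _).mpr ⟨Abelianization.of ⟨x, hx⟩, (map_pow _ _ _).symm⟩, rfl⟩
  · intro x hx y hy
    refine ⟨(⟨x, hx⟩ : D) * ⟨y, hy⟩ * (⟨x, hx⟩ : D)⁻¹ * (⟨y, hy⟩ : D)⁻¹, (hm _).mpr ⟨1, ?_⟩, rfl⟩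
    rw [map_mul, map_mul, map_mul, map_inv, map_inv, one_pow, mul_inv_cancel_comm, mul_inv_cancel]
  · rintro f hf _ ⟨x, hx, rfl⟩
    let τ : D →* D := f.restrict (show Set.MapsTo f (D : Set P) (D : Set P) from hf)
    obtain ⟨y, hy⟩ := (hm x).mp hx
    refine ⟨τ x, (hm _).mpr ⟨Abelianization.map τ y, ?_⟩, rfl⟩
    rw [← map_pow, hy, Abelianization.map_of]

theorem aux_exp {p : ℕ} [hpp : Fact p.Prime] {P : Type*} [Group P] [Finite P]
    (hP : IsPGroup p P) (A : Subgroup P) (hAn : A.Normal)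
    (hAc : ∀ x ∈ A, ∀ y ∈ A, x * y = y * x) (hAp : ∀ x ∈ A, x ^ p = 1)
    (hmax : ∀ B : Subgroup P, B.Normal → (∀ x ∈ B, ∀ y ∈ B, x * y = y * x) →
      (∀ x ∈ B, x ^ p = 1) → A ≤ B → B ≤ A)
    (D : Subgroup P) (hDn : D.Normal) (hDA : ∀ x ∈ D, ∀ a ∈ A, x * a = a * x)
    (hDp : ∀ x ∈ D, x ^ p = 1) : D ≤ A := by
  by_contra hDle
  have hn : (D.map (QuotientGroup.mk' A)).Normal :=
    hDn.map _ (QuotientGroup.mk'_surjective A)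
  have hne : D.map (QuotientGroup.mk' A) ≠ ⊥ := by
    intro h
    rw [Subgroup.map_eq_bot_iff, QuotientGroup.ker_mk'] at h
    exact hDle h
  obtain ⟨_, ⟨x, hxD, rfl⟩, hx1, hxc⟩ := aux_center (hP.to_quotient A) _ hne
  have hxA : x ∉ A := by
    intro h; apply hx1; simpa using h
  have hxa : ∀ a ∈ A, Commute x a := fun a ha => hDA x hxD a ha
  let B : Subgroup P := (Subgroup.zpowers (QuotientGroup.mk' A x)).comap (QuotientGroup.mk' A)
  have hB : ∀ b ∈ B, ∃ i : ℤ, ∃ a ∈ A, b = x ^ i * a := by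
    rintro b ⟨i, hi⟩
    refine ⟨i, (x ^ i)⁻¹ * b, ?_, by simp⟩
    have hi' : QuotientGroup.mk' A (x ^ i) = QuotientGroup.mk' A b := by
      rw [map_zpow]; exact hi
    exact QuotientGroup.eq.mp hi'
  have hxB : x ∈ B := Subgroup.mem_zpowers _
  refine hxA (hmax B ?_ ?_ ?_ ?_ hxB)
  · have : (Subgroup.zpowers (QuotientGroup.mk' A x)).Normal := by
      constructor
      rintro _ ⟨i, rfl⟩ g
      refine ⟨i, ?_⟩
      simp only
      rw [← conj_zpow, hxc]
    exact this.comap _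
  · intro b hb b' hb'
    obtain ⟨i, a, ha, rfl⟩ := hB b hb
    obtain ⟨j, a', ha', rfl⟩ := hB b' hb'
    have h1 : Commute (x ^ i) (x ^ j * a') :=
      ((Commute.refl x).zpow_zpow i j).mul_right ((hxa a' ha').zpow_left i)
    have h2 : Commute a (x ^ j * a') :=
      ((hxa a ha).symm.zpow_right j).mul_right (hAc a ha a' ha')
    exact h1.mul_left h2
  · intro b hb
    obtain ⟨i, a, ha, rfl⟩ := hB b hb
    rw [((hxa a ha).zpow_left i).mul_pow, hAp a ha, mul_one, ← zpow_natCast, ← zpow_mul,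
      mul_comm, zpow_mul, zpow_natCast, hDp x hxD, one_zpow]
  · intro a ha
    change QuotientGroup.mk' A a ∈ Subgroup.zpowers (QuotientGroup.mk' A x)
    have : QuotientGroup.mk' A a = 1 := by simpa using ha
    rw [this]; exact one_mem _

theorem aux_fix {p : ℕ} [hpp : Fact p.Prime] (hp : Odd p) {P : Type*} [Group P] [Finite P]
    (hP : IsPGroup p P) (A : Subgroup P) (hAn : A.Normal)
    (hAc : ∀ x ∈ A, ∀ y ∈ A, x * y = y * x) (hAp : ∀ x ∈ A, x ^ p = 1)
    (hmax : ∀ B : Subgroup P, B.Normal → (∀ x ∈ B, ∀ y ∈ B, x * y = y * x) →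
      (∀ x ∈ B, x ^ p = 1) → A ≤ B → B ≤ A)
    (φ : MulAut P) (k : ℕ) (hk : Nat.Coprime p k) (hφ : φ ^ k = 1) (hfix : ∀ a ∈ A, φ a = a)
    (D : Subgroup P) (hDn : D.Normal) (hDφ : ∀ x ∈ D, φ x ∈ D)
    (hDA : ∀ x ∈ D, ∀ a ∈ A, x * a = a * x) : ∀ x ∈ D, φ x = x := by
  induction D using WellFoundedLT.induction with
  | ind D ih =>
  by_contra hne
  have hlt : ∀ E < D, E.Normal → (∀ x ∈ E, φ x ∈ E) → ∀ x ∈ E, φ x = x := fun E hE h1 h2 =>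
    ih E hE h1 h2 (fun x hx => hDA x (hE.le hx))
  have hred : ¬ ∀ x ∈ D, φ (x⁻¹ * φ x) = x⁻¹ * φ x := fun h =>
    hne fun x hx => aux_coprime hP φ k hk hφ x (h x hx)
  have hnD : ∀ x ∈ D, x⁻¹ * φ x ∈ D := fun x hx => mul_mem (inv_mem hx) (hDφ x hx)
  have hcen : ∀ E < D, E.Normal → (∀ x ∈ E, φ x ∈ E) → ∀ x ∈ D, ∀ e ∈ E, x * e = e * x := by
    intro E hE hEn hEφ
    have hEf := hlt E hE hEn hEφ
    let Z := D ⊓ Subgroup.centralizer (E : Set P)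
    have hZm : ∀ x, x ∈ Z ↔ x ∈ D ∧ ∀ e ∈ E, e * x = x * e := by
      intro x; simp [Z, Subgroup.mem_inf, Subgroup.mem_centralizer_iff]
    have hZn : Z.Normal := by
      constructor
      intro x hx g
      rw [hZm] at hx ⊢
      refine ⟨hDn.conj_mem x hx.1 g, fun e he => ?_⟩
      have := hx.2 (g⁻¹ * e * g) (by simpa using hEn.conj_mem e he g⁻¹)
      calc e * (g * x * g⁻¹) = g * ((g⁻¹ * e * g) * x) * g⁻¹ := by group
        _ = g * (x * (g⁻¹ * e * g)) * g⁻¹ := by rw [this]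
        _ = _ := by group
    have hZφ : ∀ x ∈ Z, φ x ∈ Z := by
      intro x hx
      rw [hZm] at hx ⊢
      refine ⟨hDφ x hx.1, fun e he => ?_⟩
      have := congrArg φ (hx.2 e he)
      rwa [map_mul, map_mul, hEf e he] at this
    have hnZ : ∀ x ∈ D, x⁻¹ * φ x ∈ Z := by
      intro x hx
      rw [hZm]
      refine ⟨hnD x hx, fun e he => ?_⟩
      have h1 := hEf _ (hEn.conj_mem e he x)
      rw [map_mul, map_mul, map_inv, hEf e he] at h1
      calc e * (x⁻¹ * φ x) = x⁻¹ * (x * e * x⁻¹) * φ x := by group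
        _ = x⁻¹ * (φ x * e * (φ x)⁻¹) * φ x := by rw [h1]
        _ = _ := by group
    by_cases hZD : D ≤ Z
    · intro x hx e he
      exact (((hZm x).mp (hZD hx)).2 e he).symm
    · exfalso
      have hZlt : Z < D := lt_of_le_not_ge inf_le_left hZD
      exact hred fun x hx => hlt Z hZlt hZn hZφ _ (hnZ x hx)
  have hDbot : D ≠ ⊥ := by
    rintro rfl
    apply hne
    intro x hx
    rw [Subgroup.mem_bot] at hx
    simp [hx]
  obtain ⟨F, hFD, hFp, hFc, hFf⟩ := aux_frattini hP D hDbot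
  have hFn : F.Normal := ⟨fun x hx g =>
    hFf (MulAut.conj g).toMonoidHom (fun y hy => hDn.conj_mem y hy g) x hx⟩
  have hFφ : ∀ x ∈ F, φ x ∈ F := hFf φ.toMonoidHom hDφ
  have hFcen := hcen F hFD hFn hFφ
  have hFfix := hlt F hFD hFn hFφ
  have hpow : ∀ x ∈ D, ∀ y ∈ D, (x * y) ^ p = x ^ p * y ^ p := by
    intro x hx y hy
    apply aux_pow_mul hp
    · intro z hz
      have hzD : z ∈ D := by rcases hz with rfl | rfl <;> assumption
      have : y⁻¹ * x⁻¹ * y * x ∈ F := by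
        simpa using hFc y⁻¹ (inv_mem hy) x⁻¹ (inv_mem hx)
      exact (hFcen z hzD _ this).symm
    · exact (hFcen y hy _ (hFp x hx)).symm
  have hnp : ∀ x ∈ D, (x⁻¹ * φ x) ^ p = 1 := by
    intro x hx
    have h1 := hpow x hx _ (hnD x hx)
    rw [mul_inv_cancel_left, ← map_pow, hFfix _ (hFp x hx)] at h1
    simpa using h1
  let Ω : Subgroup P :=
    { carrier := {x | x ∈ D ∧ x ^ p = 1}
      one_mem' := ⟨one_mem D, one_pow p⟩
      mul_mem' := fun {a b} ha hb => ⟨mul_mem ha.1 hb.1, by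
        rw [hpow a ha.1 b hb.1, ha.2, hb.2, one_mul]⟩
      inv_mem' := fun {a} ha => ⟨inv_mem ha.1, by rw [inv_pow, ha.2, inv_one]⟩ }
  have hΩ : ∀ x, x ∈ Ω ↔ x ∈ D ∧ x ^ p = 1 := fun x => Iff.rfl
  have hΩD : Ω ≤ D := fun x hx => ((hΩ x).mp hx).1
  by_cases hDΩ : D ≤ Ω
  · have := aux_exp hP A hAn hAc hAp hmax D hDn hDA (fun x hx => ((hΩ x).mp (hDΩ hx)).2)
    exact hne fun x hx => hfix x (this hx)
  · have hΩn : Ω.Normal := ⟨fun x hx g => by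
      rw [hΩ] at hx ⊢
      exact ⟨hDn.conj_mem x hx.1 g, by rw [conj_pow, hx.2]; simp⟩⟩
    refine hred fun x hx => hlt Ω (lt_of_le_not_ge hΩD hDΩ) hΩn ?_ _ ⟨hnD x hx, hnp x hx⟩
    intro x hx
    rw [hΩ] at hx ⊢
    exact ⟨hDφ x hx.1, by rw [← map_pow, hx.2, map_one]⟩

theorem aux_fix_all {p : ℕ} [hpp : Fact p.Prime] (hp : Odd p) {P : Type*} [Group P] [Finite P]
    (hP : IsPGroup p P) (A : Subgroup P) (hAn : A.Normal)
    (hAc : ∀ x ∈ A, ∀ y ∈ A, x * y = y * x) (hAp : ∀ x ∈ A, x ^ p = 1)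
    (hmax : ∀ B : Subgroup P, B.Normal → (∀ x ∈ B, ∀ y ∈ B, x * y = y * x) →
      (∀ x ∈ B, x ^ p = 1) → A ≤ B → B ≤ A)
    (φ : MulAut P) (k : ℕ) (hk : Nat.Coprime p k) (hφ : φ ^ k = 1) (hfix : ∀ a ∈ A, φ a = a) :
    ∀ x, φ x = x := by
  let C := Subgroup.centralizer (A : Set P)
  have hC : ∀ x, x ∈ C ↔ ∀ a ∈ A, a * x = x * a := by
    intro x; simp [C, Subgroup.mem_centralizer_iff]
  have hCn : C.Normal := by
    constructor
    intro x hx g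
    rw [hC] at hx ⊢
    intro e he
    have := hx (g⁻¹ * e * g) (by simpa using hAn.conj_mem e he g⁻¹)
    calc e * (g * x * g⁻¹) = g * ((g⁻¹ * e * g) * x) * g⁻¹ := by group
      _ = g * (x * (g⁻¹ * e * g)) * g⁻¹ := by rw [this]
      _ = _ := by group
  have hCf := aux_fix hp hP A hAn hAc hAp hmax φ k hk hφ hfix C hCn (by
    intro x hx
    rw [hC] at hx ⊢
    intro a ha
    have := congrArg φ (hx a ha)
    rwa [map_mul, map_mul, hfix a ha] at this) (fun x hx a ha => ((hC x).mp hx a ha).symm)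
  intro x
  apply aux_coprime hP φ k hk hφ x
  apply hCf
  rw [hC]
  intro e he
  have h1 := hfix _ (hAn.conj_mem e he x)
  rw [map_mul, map_mul, map_inv, hfix e he] at h1
  calc e * (x⁻¹ * φ x) = x⁻¹ * (x * e * x⁻¹) * φ x := by group
    _ = x⁻¹ * (φ x * e * (φ x)⁻¹) * φ x := by rw [h1]
    _ = _ := by group

/-- `N` is a Sylow `p`-subgroup of the subgroup `M`. -/
def AuxSyl (p : ℕ) {G : Type*} [Group G] (M N : Subgroup G) : Prop :=
  ∃ T : Sylow p M, (T : Subgroup M).map M.subtype = N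

theorem AuxSyl.le {p : ℕ} {G : Type*} [Group G] {M N : Subgroup G} (h : AuxSyl p M N) : N ≤ M := by
  obtain ⟨T, rfl⟩ := h
  exact Subgroup.map_subtype_le _

theorem AuxSyl.isPGroup {p : ℕ} {G : Type*} [Group G] {M N : Subgroup G} (h : AuxSyl p M N) :
    IsPGroup p N := by
  obtain ⟨T, rfl⟩ := h
  exact T.isPGroup'.map _

theorem AuxSyl.conj {p : ℕ} [Fact p.Prime] {G : Type*} [Group G] [Finite G] {M N : Subgroup G}
    (h : AuxSyl p M N) (X : Subgroup G) (hX : X ≤ M) (hXp : IsPGroup p X) :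
    ∃ m ∈ M, ∀ x ∈ X, m * x * m⁻¹ ∈ N := by
  obtain ⟨T, rfl⟩ := h
  have hX' : IsPGroup p (X.subgroupOf M) := hXp.comap_subtype
  obtain ⟨Q, hQ⟩ := hX'.exists_le_sylow
  obtain ⟨m, hm⟩ := MulAction.exists_smul_eq M Q T
  refine ⟨m, m.2, fun x hx => ?_⟩
  have hxQ : (⟨x, hX hx⟩ : M) ∈ Q := hQ hx
  have h2 : m * ⟨x, hX hx⟩ * m⁻¹ ∈ (T : Subgroup M) := by
    rw [← hm]
    exact ⟨⟨x, hX hx⟩, hxQ, rfl⟩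
  exact ⟨_, h2, rfl⟩

theorem AuxSyl.of_max {p : ℕ} {G : Type*} [Group G] {M N : Subgroup G}
    (hNM : N ≤ M) (hN : IsPGroup p N) (hmax : ∀ X ≤ M, IsPGroup p X → N ≤ X → X ≤ N) :
    AuxSyl p M N := by
  refine ⟨⟨N.subgroupOf M, hN.comap_subtype, ?_⟩, ?_⟩
  · intro Q hQ hle
    refine le_antisymm ?_ hle
    intro x hx
    refine hmax (Q.map M.subtype) (Subgroup.map_subtype_le _) (hQ.map _) ?_ ⟨x, hx, rfl⟩
    intro y hy
    exact ⟨⟨y, hNM hy⟩, hle hy, rfl⟩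
  · exact Subgroup.map_subgroupOf_eq_of_le hNM

theorem aux_card_conj {G : Type*} [Group G] [Finite G] (X N : Subgroup G) (m : G)
    (h : ∀ x ∈ X, m * x * m⁻¹ ∈ N) : Nat.card X ≤ Nat.card N := by
  refine Nat.card_le_card_of_injective (fun x : X => (⟨m * x * m⁻¹, h x x.2⟩ : N)) ?_
  intro x y hxy
  have := congrArg Subtype.val hxy
  simp only [mul_left_inj, mul_right_inj] at this
  exact Subtype.ext this

theorem aux_le_of_card {G : Type*} [Group G] [Finite G] (X N : Subgroup G) (h : N ≤ X)
    (hc : Nat.card X ≤ Nat.card N) : X ≤ N :=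
  (Subgroup.eq_of_le_of_card_ge h hc).ge

theorem AuxSyl.mono {p : ℕ} [Fact p.Prime] {G : Type*} [Group G] [Finite G] {M M' N : Subgroup G}
    (h : AuxSyl p M N) (hM : M' ≤ M) (hN : N ≤ M') : AuxSyl p M' N := by
  refine AuxSyl.of_max hN h.isPGroup fun X hX hXp hNX => ?_
  obtain ⟨m, -, hm⟩ := h.conj X (hX.trans hM) hXp
  exact aux_le_of_card X N hNX (aux_card_conj X N m hm)

theorem AuxSyl.exists_ge {p : ℕ} {G : Type*} [Group G] {M Y : Subgroup G}
    (hY : Y ≤ M) (hYp : IsPGroup p Y) : ∃ N, Y ≤ N ∧ AuxSyl p M N := by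
  have hX' : IsPGroup p (Y.subgroupOf M) := hYp.comap_subtype
  obtain ⟨Q, hQ⟩ := hX'.exists_le_sylow
  refine ⟨_, ?_, Q, rfl⟩
  intro y hy
  exact ⟨⟨y, hY hy⟩, hQ hy, rfl⟩

theorem aux_quot {p : ℕ} [Fact p.Prime] {M : Type*} [Group M] [Finite M] (C : Subgroup M) [C.Normal]
    (N : Sylow p M) (X : Subgroup M) (hX : ∀ x ∈ X, ∃ j : ℕ, x ^ (p ^ j) ∈ C) :
    ∃ m : M, ∀ x ∈ X, ∃ n ∈ N, ∃ c ∈ C, m * x * m⁻¹ = n * c := by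
  have hs := QuotientGroup.mk'_surjective C
  have hXp : IsPGroup p (X.map (QuotientGroup.mk' C)) := by
    rw [isPGroup_iff_pow_pow_eq_one]
    rintro ⟨_, x, hx, rfl⟩
    obtain ⟨j, hj⟩ := hX x hx
    refine ⟨j, Subtype.ext ?_⟩
    change (QuotientGroup.mk' C x) ^ (p ^ j) = 1
    rw [← map_pow]
    exact (QuotientGroup.eq_one_iff _).mpr hj
  obtain ⟨Q, hQ⟩ := hXp.exists_le_sylow
  obtain ⟨m', hm'⟩ := MulAction.exists_smul_eq (M ⧸ C) Q (N.mapSurjective hs)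
  obtain ⟨m, rfl⟩ := hs m'
  refine ⟨m, fun x hx => ?_⟩
  have hxQ : QuotientGroup.mk' C x ∈ Q := hQ ⟨x, hx, rfl⟩
  have h2 : QuotientGroup.mk' C m * QuotientGroup.mk' C x * (QuotientGroup.mk' C m)⁻¹ ∈
      ((N.mapSurjective hs : Sylow p (M ⧸ C)) : Subgroup (M ⧸ C)) := by
    rw [← hm']
    exact ⟨_, hxQ, rfl⟩
  rw [Sylow.coe_mapSurjective] at h2
  obtain ⟨n, hn, hnx⟩ := h2
  refine ⟨n, hn, n⁻¹ * (m * x * m⁻¹), ?_, by group⟩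
  rw [← map_inv, ← map_mul, ← map_mul] at hnx
  exact QuotientGroup.eq.mp hnx

theorem AuxSyl.quot {p : ℕ} [Fact p.Prime] {G : Type*} [Group G] [Finite G] {M N : Subgroup G}
    (h : AuxSyl p M N) (C : Subgroup G) (hC : ∀ m ∈ M, ∀ c ∈ C, m * c * m⁻¹ ∈ C)
    (X : Subgroup G) (hXM : X ≤ M) (hX : ∀ x ∈ X, ∃ j : ℕ, x ^ (p ^ j) ∈ C) :
    ∃ m ∈ M, ∀ x ∈ X, ∃ n ∈ N, ∃ c ∈ C, m * x * m⁻¹ = n * c := by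
  obtain ⟨T, rfl⟩ := h
  have : (C.subgroupOf M).Normal := ⟨fun c hc m => hC m m.2 c hc⟩
  obtain ⟨m, hm⟩ := aux_quot (C.subgroupOf M) T (X.subgroupOf M) (fun x hx => hX x hx)
  refine ⟨m, m.2, fun x hx => ?_⟩
  obtain ⟨n, hn, c, hc, e⟩ := hm ⟨x, hXM hx⟩ hx
  exact ⟨n, ⟨n, hn, rfl⟩, c, hc, congrArg Subtype.val e⟩

theorem aux_mem_normalizer {G : Type*} [Group G] [Finite G] (P : Subgroup G) (g : G)
    (h : ∀ x ∈ P, g * x * g⁻¹ ∈ P) : g ∈ Subgroup.normalizer (P : Set G) := by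
  rw [Subgroup.mem_normalizer_iff]
  intro x
  refine ⟨h x, fun hx => ?_⟩
  have hinj : Function.Injective (fun x : P => (⟨g * x * g⁻¹, h x x.2⟩ : P)) := by
    intro x y hxy
    have := congrArg Subtype.val hxy
    simp only [mul_left_inj, mul_right_inj] at this
    exact Subtype.ext this
  obtain ⟨y, hy⟩ := Finite.injective_iff_surjective.mp hinj ⟨_, hx⟩
  have := congrArg Subtype.val hy
  simp only [mul_left_inj, mul_right_inj] at this
  rw [← SetLike.mem_coe] 
  rw [← this]; exact y.2

theorem aux_maxA {p : ℕ} [Fact p.Prime] (hp : Odd p) {G : Type*} [Group G] [Finite G]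
    (P : Subgroup G) (hP : IsPGroup p P) :
    ∃ A ≤ P, (∀ y ∈ P, ∀ a ∈ A, y * a * y⁻¹ ∈ A) ∧ (∀ x ∈ A, ∀ y ∈ A, x * y = y * x) ∧
      (∀ x ∈ A, x ^ p = 1) ∧
      ∀ y ∈ Subgroup.normalizer (P : Set G), (∀ a ∈ A, y * a * y⁻¹ = a) →
        ∃ j : ℕ, ∀ x ∈ P, y ^ (p ^ j) * x * (y ^ (p ^ j))⁻¹ = x := by
  let 𝒜 : Set (Subgroup P) := {B | B.Normal ∧ (∀ x ∈ B, ∀ y ∈ B, x * y = y * x) ∧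
      (∀ x ∈ B, x ^ p = 1)}
  have hne : 𝒜.Nonempty := ⟨⊥, inferInstance, by simp, by simp⟩
  obtain ⟨A, hA⟩ := (Set.toFinite 𝒜).exists_maximal hne
  have hA1 := hA.prop
  refine ⟨A.map P.subtype, Subgroup.map_subtype_le _, ?_, ?_, ?_, ?_⟩
  · rintro y hy _ ⟨a, ha, rfl⟩
    exact ⟨_, hA1.1.conj_mem a ha ⟨y, hy⟩, rfl⟩
  · rintro _ ⟨a, ha, rfl⟩ _ ⟨b, hb, rfl⟩
    exact congrArg Subtype.val (hA1.2.1 a ha b hb)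
  · rintro _ ⟨a, ha, rfl⟩
    exact congrArg Subtype.val (hA1.2.2 a ha)
  · intro y hy hya
    set j := (orderOf y).factorization p with hj
    have ho : orderOf y ≠ 0 := (orderOf_pos y).ne'
    set k := orderOf y / p ^ j with hk
    have hkp : p.Coprime k := Nat.coprime_ordCompl (Fact.out) ho
    have hjk : p ^ j * k = orderOf y := Nat.ordProj_mul_ordCompl_eq_self _ _
    let y' : Subgroup.normalizer (P : Set G) := ⟨y, hy⟩
    let φ : MulAut P := P.normalizerMonoidHom y'
    have hφ : (φ ^ (p ^ j)) ^ k = 1 := by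
      rw [← pow_mul, hjk, ← map_pow]
      have : y' ^ orderOf y = 1 := Subtype.ext (pow_orderOf_eq_one y)
      rw [this, map_one]
    have hφa : ∀ a ∈ A, φ a = a := fun a ha => Subtype.ext (hya a ⟨a, ha, rfl⟩)
    have hφa' : ∀ a ∈ A, ∀ i : ℕ, (φ ^ i) a = a := by
      intro a ha i
      induction i with
      | zero => rfl
      | succ i ih => rw [pow_succ, MulAut.mul_apply, hφa a ha, ih]
    have := aux_fix_all hp hP A hA1.1 hA1.2.1 hA1.2.2
      (fun B h1 h2 h3 h4 => hA.le_of_ge ⟨h1, h2, h3⟩ h4) (φ ^ (p ^ j)) k hkp hφ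
      (fun a ha => hφa' a ha _)
    refine ⟨j, fun x hx => ?_⟩
    have h2 := congrArg Subtype.val (this ⟨x, hx⟩)
    rw [← map_pow] at h2
    exact h2

theorem aux_A {p : ℕ} [Fact p.Prime] (hp : Odd p) {G : Type*} [Group G] [Finite G]
    (P N : Subgroup G) (hP : IsPGroup p P) (hN : AuxSyl p (Subgroup.normalizer (P : Set G)) N) :
    ∃ A ≤ P, (∀ y ∈ P, ∀ a ∈ A, y * a * y⁻¹ ∈ A) ∧ (∀ x ∈ A, ∀ y ∈ A, x * y = y * x) ∧
      (∀ x ∈ A, x ^ p = 1) ∧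
      ∀ y ∈ Subgroup.normalizer (P : Set G), (∀ a ∈ A, y * a * y⁻¹ = a) →
        ∃ n ∈ N, ∀ x ∈ P, y * x * y⁻¹ = n * x * n⁻¹ := by
  obtain ⟨A, hAP, hAn, hAc, hAp, hA⟩ := aux_maxA hp P hP
  set M := Subgroup.normalizer (P : Set G) with hM
  let C := Subgroup.centralizer (P : Set G)
  have hC : ∀ c, c ∈ C ↔ ∀ x ∈ P, c * x * c⁻¹ = x := by
    intro c
    simp only [C, Subgroup.mem_centralizer_iff, mul_inv_eq_iff_eq_mul]
    exact ⟨fun h x hx => (h x hx).symm, fun h x hx => (h x hx).symm⟩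
  let X := M ⊓ Subgroup.centralizer (A : Set G)
  have hX : ∀ c, c ∈ X ↔ c ∈ M ∧ ∀ x ∈ A, c * x * c⁻¹ = x := by
    intro c
    simp only [X, Subgroup.mem_inf, Subgroup.mem_centralizer_iff, mul_inv_eq_iff_eq_mul]
    exact ⟨fun h => ⟨h.1, fun x hx => (h.2 x hx).symm⟩, fun h => ⟨h.1, fun x hx => (h.2 x hx).symm⟩⟩
  have hMP : ∀ m ∈ M, ∀ x ∈ P, m * x * m⁻¹ ∈ P := fun m hm x hx =>
    (Subgroup.mem_normalizer_iff.mp hm x).mp hx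
  have hMP' : ∀ m ∈ M, ∀ x ∈ P, m⁻¹ * x * m ∈ P := fun m hm x hx => by
    simpa using hMP m⁻¹ (inv_mem hm) x hx
  obtain ⟨m, hm, hmX⟩ := hN.quot C (by
    intro m hm c hc
    rw [hC] at hc ⊢
    intro x hx
    have := hc _ (hMP' m hm x hx)
    calc m * c * m⁻¹ * x * (m * c * m⁻¹)⁻¹ = m * (c * (m⁻¹ * x * m) * c⁻¹) * m⁻¹ := by group
      _ = _ := by rw [this]; group) X inf_le_left (by
    intro x hx
    rw [hX] at hx
    obtain ⟨j, hj⟩ := hA x hx.1 hx.2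
    exact ⟨j, (hC _).mpr hj⟩)
  have hmem : ∀ b, b ∈ A.map (MulAut.conj m).toMonoidHom ↔ m⁻¹ * b * m ∈ A := by
    intro b
    constructor
    · rintro ⟨a, ha, rfl⟩
      have : m⁻¹ * (m * a * m⁻¹) * m = a := by group
      change m⁻¹ * (m * a * m⁻¹) * m ∈ A
      rwa [this]
    · intro h
      refine ⟨_, h, ?_⟩
      change m * (m⁻¹ * b * m) * m⁻¹ = b
      group
  refine ⟨A.map (MulAut.conj m).toMonoidHom, ?_, ?_, ?_, ?_, ?_⟩
  · rintro _ ⟨a, ha, rfl⟩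
    exact hMP m hm a (hAP ha)
  · intro y hy a ha
    rw [hmem] at ha ⊢
    have := hAn _ (hMP' m hm y hy) _ ha
    have e : m⁻¹ * (y * a * y⁻¹) * m = m⁻¹ * y * m * (m⁻¹ * a * m) * (m⁻¹ * y * m)⁻¹ := by group
    rwa [e]
  · rintro _ ⟨a, ha, rfl⟩ _ ⟨b, hb, rfl⟩
    rw [← map_mul, hAc a ha b hb, map_mul]
  · rintro _ ⟨a, ha, rfl⟩
    rw [← map_pow, hAp a ha, map_one]
  · intro y hy hya
    have hyX : m⁻¹ * y * m ∈ X := by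
      rw [hX]
      refine ⟨mul_mem (mul_mem (inv_mem hm) hy) hm, fun a ha => ?_⟩
      have := hya (m * a * m⁻¹) ⟨a, ha, rfl⟩
      calc m⁻¹ * y * m * a * (m⁻¹ * y * m)⁻¹ = m⁻¹ * (y * (m * a * m⁻¹) * y⁻¹) * m := by group
        _ = a := by rw [this]; group
    obtain ⟨n, hn, c, hc, e⟩ := hmX _ hyX
    refine ⟨n, hn, fun x hx => ?_⟩
    have hy' : y = n * c := by rw [← e]; group
    calc y * x * y⁻¹ = n * (c * x * c⁻¹) * n⁻¹ := by rw [hy']; group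
      _ = _ := by rw [(hC c).mp hc x hx]

theorem aux_mem_conj {G : Type*} [Group G] (A : Subgroup G) (m b : G) :
    b ∈ A.map (MulAut.conj m).toMonoidHom ↔ m⁻¹ * b * m ∈ A := by
  constructor
  · rintro ⟨a, ha, rfl⟩
    have : m⁻¹ * (m * a * m⁻¹) * m = a := by group
    change m⁻¹ * (m * a * m⁻¹) * m ∈ A
    rwa [this]
  · intro h
    refine ⟨_, h, ?_⟩
    change m * (m⁻¹ * b * m) * m⁻¹ = b
    group

/-- Elements of `K` acting on `A` as elements of `N`. -/
def auxAct {G : Type*} [Group G] (K N A : Subgroup G)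
    (hN : ∀ n ∈ N, ∀ a ∈ A, n * a * n⁻¹ ∈ A) : Subgroup G where
  carrier := {w | w ∈ K ∧ ∃ n ∈ N, ∀ a ∈ A, w * a * w⁻¹ = n * a * n⁻¹}
  one_mem' := ⟨one_mem K, 1, one_mem N, fun _ _ => rfl⟩
  mul_mem' := by
    rintro w v ⟨hw, n, hn, h1⟩ ⟨hv, l, hl, h2⟩
    refine ⟨mul_mem hw hv, n * l, mul_mem hn hl, fun a ha => ?_⟩
    calc w * v * a * (w * v)⁻¹ = w * (v * a * v⁻¹) * w⁻¹ := by group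
      _ = n * (l * a * l⁻¹) * n⁻¹ := by rw [h2 a ha, h1 _ (hN l hl a ha)]
      _ = _ := by group
  inv_mem' := by
    rintro w ⟨hw, n, hn, h1⟩
    refine ⟨inv_mem hw, n⁻¹, inv_mem hn, fun a ha => ?_⟩
    have h2 := h1 _ (hN n⁻¹ (inv_mem hn) a ha)
    have h3 : n * (n⁻¹ * a * n⁻¹⁻¹) * n⁻¹ = a := by group
    rw [h3] at h2
    calc w⁻¹ * a * w⁻¹⁻¹ = w⁻¹ * (w * (n⁻¹ * a * n⁻¹⁻¹) * w⁻¹) * w := by rw [h2]; group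
      _ = _ := by group

theorem mem_auxAct {G : Type*} [Group G] (K N A : Subgroup G)
    (hN : ∀ n ∈ N, ∀ a ∈ A, n * a * n⁻¹ ∈ A) (w : G) :
    w ∈ auxAct K N A hN ↔ w ∈ K ∧ ∃ n ∈ N, ∀ a ∈ A, w * a * w⁻¹ = n * a * n⁻¹ := Iff.rfl

theorem aux_normalizer_lt {p : ℕ} [Fact p.Prime] {G : Type*} [Group G] [Finite G]
    (P U : Subgroup G) (hU : IsPGroup p U) (hPU : P < U) :
    P < U ⊓ Subgroup.normalizer (P : Set G) := by
  have : Group.IsNilpotent U := hU.isNilpotent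
  have hc : NormalizerCondition U := Group.normalizerCondition_of_isNilpotent
  have hlt : P.subgroupOf U < ⊤ := by
    rw [lt_top_iff_ne_top]
    intro h
    exact hPU.not_ge (Subgroup.subgroupOf_eq_top.mp h)
  have h2 := hc _ hlt
  obtain ⟨u, hu, hun⟩ := SetLike.exists_of_lt h2
  have hPn : P ≤ U ⊓ Subgroup.normalizer (P : Set G) :=
    le_inf hPU.le Subgroup.le_normalizer
  refine lt_of_le_of_ne hPn ?_
  intro h
  apply hun
  change (u : G) ∈ P
  rw [h]
  refine ⟨u.2, aux_mem_normalizer P u fun x hx => ?_⟩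
  exact (Subgroup.mem_normalizer_iff.mp hu ⟨x, hPU.le hx⟩).mp hx

theorem aux_ext {p : ℕ} [Fact p.Prime] {G : Type*} [Group G] [Finite G]
    (S H P : Subgroup G) (hSH : S ≤ H)
    (hN : AuxSyl p (Subgroup.normalizer (P : Set G)) (S ⊓ Subgroup.normalizer (P : Set G)))
    (IH : ∀ L ≤ S, P < L → ∀ g : G, (∀ x ∈ L, g * x * g⁻¹ ∈ S) →
      ∃ h ∈ H, ∀ x ∈ L, h * x * h⁻¹ = g * x * g⁻¹)
    (L : Subgroup G) (hLS : L ≤ S) (hLM : L ≤ Subgroup.normalizer (P : Set G)) (hPL : P < L)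
    (g : G) (hg : g ∈ Subgroup.normalizer (P : Set G))
    (hgL : ∀ l ∈ L, ∃ n ∈ S ⊓ Subgroup.normalizer (P : Set G),
      ∀ x ∈ P, (g * l * g⁻¹) * x * (g * l * g⁻¹)⁻¹ = n * x * n⁻¹) :
    ∃ h ∈ H, ∀ x ∈ P, h * x * h⁻¹ = g * x * g⁻¹ := by
  set M := Subgroup.normalizer (P : Set G) with hM
  have hMP : ∀ m ∈ M, ∀ x ∈ P, m * x * m⁻¹ ∈ P := fun m hm x hx =>
    (Subgroup.mem_normalizer_iff.mp hm x).mp hx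
  let Y := auxAct M (S ⊓ M) P (fun n hn => hMP n hn.2)
  have hYM : Y ≤ M := fun y hy => hy.1
  have hNY : S ⊓ M ≤ Y := fun n hn => ⟨hn.2, n, hn, fun _ _ => rfl⟩
  have hNYs := hN.mono hYM hNY
  have hLp : IsPGroup p L := hN.isPGroup.to_le (le_inf hLS hLM)
  obtain ⟨m, hm, hmL⟩ := hNYs.conj (L.map (MulAut.conj g).toMonoidHom) (by
    rintro _ ⟨l, hl, rfl⟩
    exact ⟨mul_mem (mul_mem hg (hLM hl)) (inv_mem hg), hgL l hl⟩) (hLp.map _)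
  obtain ⟨-, n, hn, hmn⟩ := hm
  obtain ⟨h, hh, hhL⟩ := IH L hLS hPL (m * g) (by
    intro x hx
    have := (hmL (g * x * g⁻¹) ⟨x, hx, rfl⟩).1
    have e : m * g * x * (m * g)⁻¹ = m * (g * x * g⁻¹) * m⁻¹ := by group
    rwa [e])
  refine ⟨n⁻¹ * h, mul_mem (inv_mem (hSH hn.1)) hh, fun x hx => ?_⟩
  have h1 := hhL x (hPL.le hx)
  have h2 := hmn _ (hMP g hg x hx)
  calc n⁻¹ * h * x * (n⁻¹ * h)⁻¹ = n⁻¹ * (h * x * h⁻¹) * n := by group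
    _ = n⁻¹ * (m * (g * x * g⁻¹) * m⁻¹) * n := by rw [h1]; group
    _ = _ := by rw [h2]; group

theorem aux_aut {p : ℕ} [Fact p.Prime] (hp : Odd p) {G : Type*} [Group G] [Finite G]
    (S H P : Subgroup G) (hSH : S ≤ H) (hPS : P ≤ S)
    (hyp : ∀ A B : Subgroup G, A ≤ S → B ≤ S →
      (∀ x ∈ A, ∀ y ∈ A, x * y = y * x) → (∀ x ∈ A, x ^ p = 1) →
      (∀ x ∈ B, ∀ y ∈ B, x * y = y * x) → (∀ x ∈ B, x ^ p = 1) →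
      ∀ g : G, (∀ x ∈ A, g * x * g⁻¹ ∈ B) →
        ∃ h ∈ H, ∀ x ∈ A, h * x * h⁻¹ = g * x * g⁻¹)
    (hN : AuxSyl p (Subgroup.normalizer (P : Set G)) (S ⊓ Subgroup.normalizer (P : Set G)))
    (IH : ∀ L ≤ S, P < L → ∀ g : G, (∀ x ∈ L, g * x * g⁻¹ ∈ S) →
      ∃ h ∈ H, ∀ x ∈ L, h * x * h⁻¹ = g * x * g⁻¹)
    (g : G) (hg : g ∈ Subgroup.normalizer (P : Set G)) :
    ∃ h ∈ H, ∀ x ∈ P, h * x * h⁻¹ = g * x * g⁻¹ := by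
  have hPp : IsPGroup p P := hN.isPGroup.to_le (le_inf hPS Subgroup.le_normalizer)
  obtain ⟨A, hAP, hAn, hAc, hAp, hA⟩ := aux_A hp P _ hPp hN
  set M := Subgroup.normalizer (P : Set G) with hM
  have hMP : ∀ m ∈ M, ∀ x ∈ P, m * x * m⁻¹ ∈ P := fun m hm x hx =>
    (Subgroup.mem_normalizer_iff.mp hm x).mp hx
  have hMP' : ∀ m ∈ M, ∀ x ∈ P, m⁻¹ * x * m ∈ P := fun m hm x hx => by
    simpa using hMP m⁻¹ (inv_mem hm) x hx
  have hPM : P ≤ M := Subgroup.le_normalizer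
  let A' := A.map (MulAut.conj g).toMonoidHom
  have hA'P : A' ≤ P := by
    rintro _ ⟨a, ha, rfl⟩
    exact hMP g hg a (hAP ha)
  have hA'm : ∀ a ∈ A, g * a * g⁻¹ ∈ A' := fun a ha => ⟨a, ha, rfl⟩
  obtain ⟨h, hh, hha⟩ := hyp A A' (hAP.trans hPS) (hA'P.trans hPS) hAc hAp (by
      rintro _ ⟨a, ha, rfl⟩ _ ⟨b, hb, rfl⟩
      rw [← map_mul, hAc a ha b hb, map_mul]) (by
      rintro _ ⟨a, ha, rfl⟩
      rw [← map_pow, hAp a ha, map_one]) g hA'm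
  have hPA' : ∀ y ∈ P, ∀ a ∈ A', y * a * y⁻¹ ∈ A' := by
    rintro y hy _ ⟨a, ha, rfl⟩
    have := hA'm _ (hAn _ (hMP' g hg y hy) a ha)
    have e : g * (g⁻¹ * y * g * a * (g⁻¹ * y * g)⁻¹) * g⁻¹ = y * (g * a * g⁻¹) * y⁻¹ := by group
    rw [e] at this
    exact this
  let W := auxAct H P A' hPA'
  have hPW : P ≤ W := fun y hy => ⟨hSH (hPS hy), y, hy, fun _ _ => rfl⟩
  have hhPW : P.map (MulAut.conj h).toMonoidHom ≤ W := by
    rintro _ ⟨y, hy, rfl⟩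
    refine ⟨mul_mem (mul_mem hh (hSH (hPS hy))) (inv_mem hh), g * y * g⁻¹, hMP g hg y hy, ?_⟩
    rintro _ ⟨a, ha, rfl⟩
    change h * y * h⁻¹ * (g * a * g⁻¹) * (h * y * h⁻¹)⁻¹ =
      g * y * g⁻¹ * (g * a * g⁻¹) * (g * y * g⁻¹)⁻¹
    calc h * y * h⁻¹ * (g * a * g⁻¹) * (h * y * h⁻¹)⁻¹
        = h * y * h⁻¹ * (h * a * h⁻¹) * (h * y * h⁻¹)⁻¹ := by rw [hha a ha]
      _ = h * (y * a * y⁻¹) * h⁻¹ := by group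
      _ = g * (y * a * y⁻¹) * g⁻¹ := hha _ (hAn y hy a ha)
      _ = _ := by group
  obtain ⟨U, hPU, hU⟩ := AuxSyl.exists_ge hPW hPp
  obtain ⟨w, ⟨hwH, y, hy, hwy⟩, hwP⟩ := hU.conj _ hhPW (hPp.map _)
  by_cases hUP : U ≤ P
  · have hwh : w * h ∈ M := by
      apply aux_mem_normalizer
      intro x hx
      have := hUP (hwP (h * x * h⁻¹) ⟨x, hx, rfl⟩)
      have e : w * h * x * (w * h)⁻¹ = w * (h * x * h⁻¹) * w⁻¹ := by group
      rwa [e]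
    have hz : (y * g)⁻¹ * (w * h) ∈ M := mul_mem (inv_mem (mul_mem (hPM hy) hg)) hwh
    obtain ⟨n, hn, hzn⟩ := hA _ hz (by
      intro a ha
      have h1 := hwy _ (hA'm a ha)
      calc (y * g)⁻¹ * (w * h) * a * ((y * g)⁻¹ * (w * h))⁻¹
          = (y * g)⁻¹ * (w * (h * a * h⁻¹) * w⁻¹) * (y * g) := by group
        _ = (y * g)⁻¹ * (y * (g * a * g⁻¹) * y⁻¹) * (y * g) := by rw [hha a ha, h1]
        _ = a := by group)
    refine ⟨y⁻¹ * w * h * n⁻¹, mul_mem (mul_mem (mul_mem (inv_mem (hSH (hPS hy))) hwH) hh)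
      (inv_mem (hSH hn.1)), fun x hx => ?_⟩
    have h1 := hzn _ (hMP' n hn.2 x hx)
    have h2 : n * (n⁻¹ * x * n) * n⁻¹ = x := by group
    rw [h2] at h1
    symm
    calc g * x * g⁻¹ = g * ((y * g)⁻¹ * (w * h) * (n⁻¹ * x * n) * ((y * g)⁻¹ * (w * h))⁻¹) * g⁻¹ := by
          rw [h1]
      _ = _ := by group
  · have hPlt : P < U := lt_of_le_not_ge hPU hUP
    have hPV := aux_normalizer_lt P U hU.isPGroup hPlt
    set V := U ⊓ M with hV
    have hVp : IsPGroup p V := hU.isPGroup.to_le inf_le_left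
    have hVW : V ≤ W := inf_le_left.trans hU.le
    have hVHM : V ≤ H ⊓ M := le_inf (fun v hv => (hVW hv).1) inf_le_right
    have hNH : AuxSyl p (H ⊓ M) (S ⊓ M) := hN.mono inf_le_right (inf_le_inf_right _ hSH)
    obtain ⟨d, hd, hdV⟩ := hNH.conj V hVHM hVp
    have hLN : V.map (MulAut.conj d).toMonoidHom ≤ S ⊓ M := by
      rintro _ ⟨v, hv, rfl⟩
      exact hdV v hv
    have hPL : P < V.map (MulAut.conj d).toMonoidHom := by
      refine lt_of_le_not_ge ?_ ?_
      · intro x hx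
        rw [aux_mem_conj]
        exact hPV.le (hMP' d hd.2 x hx)
      · intro hle
        apply hPV.not_ge
        intro v hv
        have h1 : d * v * d⁻¹ ∈ P := hle ⟨v, hv, rfl⟩
        have h2 := hMP' d hd.2 _ h1
        have e : d⁻¹ * (d * v * d⁻¹) * d = v := by group
        rwa [e] at h2
    have hdg : (d * g)⁻¹ ∈ M := inv_mem (mul_mem hd.2 hg)
    obtain ⟨k, hk, hkP⟩ := aux_ext S H P hSH hN IH _ (hLN.trans inf_le_left)
      (hLN.trans inf_le_right) hPL (d * g)⁻¹ hdg (by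
        rintro _ ⟨v, hv, rfl⟩
        obtain ⟨-, y, hy, hvy⟩ := hVW hv
        obtain ⟨n, hn, hnz⟩ := hA (g⁻¹ * (y⁻¹ * v) * g)
          (mul_mem (mul_mem (inv_mem hg) (mul_mem (inv_mem (hPM hy)) hv.2)) hg) (by
            intro a ha
            calc g⁻¹ * (y⁻¹ * v) * g * a * (g⁻¹ * (y⁻¹ * v) * g)⁻¹
                = g⁻¹ * y⁻¹ * (v * (g * a * g⁻¹) * v⁻¹) * y * g := by group
              _ = g⁻¹ * y⁻¹ * (y * (g * a * g⁻¹) * y⁻¹) * y * g := by rw [hvy _ (hA'm a ha)]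
              _ = a := by group)
        have hyg := hMP' g hg y hy
        refine ⟨(g⁻¹ * y * g) * n, mul_mem ⟨hPS hyg, hPM hyg⟩ hn, fun x hx => ?_⟩
        change (d * g)⁻¹ * (d * v * d⁻¹) * (d * g)⁻¹⁻¹ * x *
          ((d * g)⁻¹ * (d * v * d⁻¹) * (d * g)⁻¹⁻¹)⁻¹ = _
        calc (d * g)⁻¹ * (d * v * d⁻¹) * (d * g)⁻¹⁻¹ * x *
              ((d * g)⁻¹ * (d * v * d⁻¹) * (d * g)⁻¹⁻¹)⁻¹
            = g⁻¹ * y * g * (g⁻¹ * (y⁻¹ * v) * g * x * (g⁻¹ * (y⁻¹ * v) * g)⁻¹) *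
              (g⁻¹ * y * g)⁻¹ := by group
          _ = _ := by rw [hnz x hx]; group)
    refine ⟨d⁻¹ * k⁻¹, mul_mem (inv_mem hd.1) (inv_mem hk), fun x hx => ?_⟩
    have h1 := hkP _ (hMP _ (mul_mem hd.2 hg) x hx)
    have h2 : (d * g)⁻¹ * (d * g * x * (d * g)⁻¹) * (d * g)⁻¹⁻¹ = x := by group
    rw [h2] at h1
    calc d⁻¹ * k⁻¹ * x * (d⁻¹ * k⁻¹)⁻¹
        = d⁻¹ * k⁻¹ * (k * (d * g * x * (d * g)⁻¹) * k⁻¹) * (d⁻¹ * k⁻¹)⁻¹ := by rw [h1]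
      _ = _ := by group

theorem aux_conj_mem_normalizer {G : Type*} [Group G] [Finite G] (P : Subgroup G) (b x : G)
    (hx : x ∈ Subgroup.normalizer (P : Set G)) :
    b * x * b⁻¹ ∈ Subgroup.normalizer ((P.map (MulAut.conj b).toMonoidHom : Subgroup G) : Set G) := by
  apply aux_mem_normalizer
  rintro _ ⟨y, hy, rfl⟩
  have h1 := (Subgroup.mem_normalizer_iff.mp hx y).mp hy
  refine ⟨_, h1, ?_⟩
  change b * (x * y * x⁻¹) * b⁻¹ = b * x * b⁻¹ * (b * y * b⁻¹) * (b * x * b⁻¹)⁻¹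
  group

theorem aux_main {p : ℕ} [Fact p.Prime] (hp : Odd p) {G : Type*} [Group G] [Finite G]
    (S H : Subgroup G) (hSH : S ≤ H) (hS : AuxSyl p ⊤ S)
    (hyp : ∀ A B : Subgroup G, A ≤ S → B ≤ S →
      (∀ x ∈ A, ∀ y ∈ A, x * y = y * x) → (∀ x ∈ A, x ^ p = 1) →
      (∀ x ∈ B, ∀ y ∈ B, x * y = y * x) → (∀ x ∈ B, x ^ p = 1) →
      ∀ g : G, (∀ x ∈ A, g * x * g⁻¹ ∈ B) →
        ∃ h ∈ H, ∀ x ∈ A, h * x * h⁻¹ = g * x * g⁻¹) (n : ℕ) :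
    ∀ P ≤ S, Nat.card S < Nat.card P + n → ∀ g : G, (∀ x ∈ P, g * x * g⁻¹ ∈ S) →
        ∃ h ∈ H, ∀ x ∈ P, h * x * h⁻¹ = g * x * g⁻¹ := by
  induction n with
  | zero =>
    intro P hPS hc
    have := Subgroup.card_le_of_le hPS
    omega
  | succ n ih =>
    intro P hPS hc g hg
    have IH : ∀ R : Subgroup G, Nat.card R = Nat.card P →
        ∀ L ≤ S, R < L → ∀ g : G, (∀ x ∈ L, g * x * g⁻¹ ∈ S) →
        ∃ h ∈ H, ∀ x ∈ L, h * x * h⁻¹ = g * x * g⁻¹ := by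
      intro R hR L hLS hRL
      refine ih L hLS ?_
      have h1 : ¬ Nat.card L ≤ Nat.card R := fun h =>
        hRL.not_ge (aux_le_of_card L R hRL.le h)
      omega
    by_cases hSP : S ≤ P
    · obtain rfl : P = S := le_antisymm hPS hSP
      refine aux_aut hp P H P hSH le_rfl hyp ?_ (IH P rfl) g (aux_mem_normalizer P g hg)
      have : P ⊓ Subgroup.normalizer (P : Set G) = P := inf_eq_left.mpr Subgroup.le_normalizer
      rw [this]
      exact hS.mono le_top Subgroup.le_normalizer
    · have hcard : ∀ e : G, Nat.card (P.map (MulAut.conj e).toMonoidHom : Subgroup G) = Nat.card P :=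
        fun e => Subgroup.card_map_of_injective (MulAut.conj e).injective
      let cj : G → Subgroup G := fun e => P.map (MulAut.conj e).toMonoidHom
      let 𝒮 : Set G := {a | cj a ≤ S}
      have h1S : (1 : G) ∈ 𝒮 := by
        rintro _ ⟨x, hx, rfl⟩
        simpa using hPS hx
      obtain ⟨a, haS, hamax⟩ := Set.exists_max_image 𝒮
        (fun a => Nat.card (S ⊓ Subgroup.normalizer (cj a : Set G) : Subgroup G))
        (Set.toFinite 𝒮) ⟨1, h1S⟩
      have hN : AuxSyl p (Subgroup.normalizer (cj a : Set G))
          (S ⊓ Subgroup.normalizer (cj a : Set G)) := by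
        refine AuxSyl.of_max inf_le_right (hS.isPGroup.to_le inf_le_left) ?_
        intro X hXM hXp hNX
        obtain ⟨b, -, hb⟩ := hS.conj X le_top hXp
        apply aux_le_of_card _ _ hNX
        have e : cj (b * a) = (cj a).map (MulAut.conj b).toMonoidHom := by
          ext z
          simp only [cj, aux_mem_conj]
          have : (b * a)⁻¹ * z * (b * a) = a⁻¹ * (b⁻¹ * z * b) * a := by group
          rw [this]
        have hba : b * a ∈ 𝒮 := by
          change cj (b * a) ≤ S
          rw [e]
          rintro _ ⟨x, hx, rfl⟩
          exact hb x (hNX ⟨haS hx, Subgroup.le_normalizer hx⟩)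
        refine le_trans ?_ (hamax _ hba)
        apply aux_card_conj _ _ b
        intro x hx
        refine ⟨hb x hx, ?_⟩
        rw [e]
        exact aux_conj_mem_normalizer (cj a) b x (hXM hx)
      have key : ∀ e : G, (∀ x ∈ P, e * x * e⁻¹ ∈ S) →
          ∃ m ∈ Subgroup.normalizer (cj a : Set G), ∃ h ∈ H, ∀ x ∈ P,
            h * (e * x * e⁻¹) * h⁻¹ = m * (a * x * a⁻¹) * m⁻¹ := by
        intro e he
        have hRS : cj e ≤ S := by
          rintro _ ⟨x, hx, rfl⟩
          exact he x hx
        have hRlt : cj e < S := by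
          refine lt_of_le_not_ge hRS fun h => hSP ?_
          apply aux_le_of_card _ _ hPS
          rw [← hcard e]
          exact Subgroup.card_le_of_le h
        have hL := aux_normalizer_lt (cj e) S hS.isPGroup hRlt
        set L := S ⊓ Subgroup.normalizer (cj e : Set G) with hLdef
        have hLp : IsPGroup p L := hS.isPGroup.to_le inf_le_left
        have hea : (cj e).map (MulAut.conj (a * e⁻¹)).toMonoidHom = cj a := by
          ext z
          simp only [cj, aux_mem_conj]
          have : e⁻¹ * ((a * e⁻¹)⁻¹ * z * (a * e⁻¹)) * e = a⁻¹ * z * a := by group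
          rw [this]
        obtain ⟨m, hm, hmL⟩ := hN.conj (L.map (MulAut.conj (a * e⁻¹)).toMonoidHom) (by
          rintro _ ⟨l, hl, rfl⟩
          have := aux_conj_mem_normalizer (cj e) (a * e⁻¹) l hl.2
          rw [hea] at this
          exact this) (hLp.map _)
        obtain ⟨h, hh, hhL⟩ := IH (cj e) (hcard e) L inf_le_left hL (m * (a * e⁻¹)) (by
          intro x hx
          have := (hmL (a * e⁻¹ * x * (a * e⁻¹)⁻¹) ⟨x, hx, rfl⟩).1
          have e' : m * (a * e⁻¹) * x * (m * (a * e⁻¹))⁻¹ =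
            m * (a * e⁻¹ * x * (a * e⁻¹)⁻¹) * m⁻¹ := by group
          rwa [e'])
        refine ⟨m, hm, h, hh, fun x hx => ?_⟩
        rw [hhL (e * x * e⁻¹) (hL.le ⟨x, hx, rfl⟩)]
        group
      obtain ⟨m1, hm1, h1, hh1, e1⟩ := key 1 (fun x hx => by simpa using hPS hx)
      obtain ⟨m2, hm2, h2, hh2, e2⟩ := key g hg
      obtain ⟨k, hk, hkP⟩ := aux_aut hp S H (cj a) hSH haS hyp hN (IH _ (hcard a)) (m2 * m1⁻¹)
        (mul_mem hm2 (inv_mem hm1))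
      refine ⟨h2⁻¹ * k * h1, mul_mem (mul_mem (inv_mem hh2) hk) hh1, fun x hx => ?_⟩
      have hz : m1 * (a * x * a⁻¹) * m1⁻¹ ∈ cj a :=
        (Subgroup.mem_normalizer_iff.mp hm1 _).mp ⟨x, hx, rfl⟩
      have e3 := hkP _ hz
      have e1' := e1 x hx
      have e2' := e2 x hx
      calc h2⁻¹ * k * h1 * x * (h2⁻¹ * k * h1)⁻¹
          = h2⁻¹ * (k * (h1 * (1 * x * 1⁻¹) * h1⁻¹) * k⁻¹) * h2 := by group
        _ = h2⁻¹ * (m2 * m1⁻¹ * (m1 * (a * x * a⁻¹) * m1⁻¹) * (m2 * m1⁻¹)⁻¹) * h2 := by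
            rw [e1', e3]
        _ = h2⁻¹ * (m2 * (a * x * a⁻¹) * m2⁻¹) * h2 := by group
        _ = h2⁻¹ * (h2 * (g * x * g⁻¹) * h2⁻¹) * h2 := by rw [e2']
        _ = _ := by group

/-- **Control of p-fusion detected on elementary abelian subgroups, p odd.**
If `H` contains a Sylow `p`-subgroup `S` of the finite group `G` (`p` odd) and the
`G`-fusion on elementary abelian subgroups of `S` is realized in `H`, then `H`
controls `p`-fusion in `G`. -/
theorem elementary_abelian_control_fusion
    (p : ℕ) [Fact p.Prime] (hp : Odd p)
    (G : Type) [Group G] [Finite G] (S : Sylow p G) (H : Subgroup G)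
    (hSH : (S : Subgroup G) ≤ H)
    (hyp : ∀ A B : Subgroup G, A ≤ (S : Subgroup G) → B ≤ (S : Subgroup G) →
      (∀ x ∈ A, ∀ y ∈ A, x * y = y * x) → (∀ x ∈ A, x ^ p = 1) →
      (∀ x ∈ B, ∀ y ∈ B, x * y = y * x) → (∀ x ∈ B, x ^ p = 1) →
      ∀ g : G, (∀ x ∈ A, g * x * g⁻¹ ∈ B) →
        ∃ h ∈ H, ∀ x ∈ A, h * x * h⁻¹ = g * x * g⁻¹) :
    ∀ P Q : Subgroup G, P ≤ (S : Subgroup G) → Q ≤ (S : Subgroup G) →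
      ∀ g : G, (∀ x ∈ P, g * x * g⁻¹ ∈ Q) →
        ∃ h ∈ H, ∀ x ∈ P, h * x * h⁻¹ = g * x * g⁻¹ := by
  intro P Q hP hQ g hg
  have hS : AuxSyl p ⊤ (S : Subgroup G) :=
    AuxSyl.of_max le_top S.isPGroup' fun X _ hX hle => (S.is_maximal' hX hle).le
  exact aux_main hp (S : Subgroup G) H hSH hS hyp (Nat.card (S : Subgroup G) + 1) P hP (by omega) g
    (fun x hx => hQ (hg x hx))
end

section
/- Let G be a finite group, S a Sylow 2-subgroup of G, and H a subgroup with S ≤ H ≤ G. Suppose that for all abelian subgroups A, B ≤ S of exponent dividing 4 and every g ∈ G with gAg⁻¹ ≤ B, there exists h ∈ H with hxh⁻¹ = gxg⁻¹ for all x ∈ A. Then H controls 2-fusion in G: for all subgroups P, Q ≤ S and every g ∈ G with gPg⁻¹ ≤ Q there exists h ∈ H with hxh⁻¹ = gxg⁻¹ for all x ∈ P. -/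
namespace FourFusion

/-- Elements `y` of `Y` with `y ^ 4 = 1` are central, and `Y` has exponent dividing `2 ^ k`. -/
structure FC {W : Type} [Group W] (Y : Subgroup W) (k : ℕ) : Prop where
  normal : Y.Normal
  cen : ∀ y ∈ Y, y ^ 4 = 1 → ∀ w : W, w * y = y * w
  ex : ∀ y ∈ Y, y ^ (2 ^ k) = 1

lemma FC.step {W : Type} [Group W] {Y : Subgroup W} {k : ℕ} (h : FC Y k)
    (y : W) (hy : y ∈ Y) (h8 : y ^ 8 = 1) (w : W) :
    (y⁻¹ * (w * y * w⁻¹)) ^ 2 = 1 := by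
  have hy2 : ∀ w : W, w * y ^ 2 = y ^ 2 * w :=
    h.cen _ (Y.pow_mem hy 2) (by rw [← pow_mul]; exact h8)
  set b := w * y * w⁻¹ with hb
  have hbY : b ∈ Y := h.normal.conj_mem y hy w
  have hb2 : b ^ 2 = y ^ 2 := by
    rw [hb, conj_pow, hy2 w]; group
  set u := y⁻¹ * b with hu
  have huY : u ∈ Y := Y.mul_mem (Y.inv_mem hy) hbY
  have hinv : y⁻¹ * u * y = u⁻¹ := by
    have e1 : b⁻¹ = b * (y ^ 2)⁻¹ := by rw [← hb2]; group
    have e2 : (y ^ 2)⁻¹ * b = b * (y ^ 2)⁻¹ := by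
      rw [inv_mul_eq_iff_eq_mul, ← mul_assoc, ← hy2 b]; group
    calc y⁻¹ * u * y = (y ^ 2)⁻¹ * b * y := by rw [hu]; group
      _ = b * (y ^ 2)⁻¹ * y := by rw [e2]
      _ = u⁻¹ := by rw [hu, mul_inv_rev, inv_inv, e1]
  have key : ∀ m : ℕ, u ^ (2 ^ m) = 1 → u ^ 2 = 1 := by
    intro m
    induction m with
    | zero => intro h1; simp at h1; simp [h1]
    | succ m ih =>
      cases m with
      | zero => intro h1; simpa using h1
      | succ m =>
        intro h1
        apply ih
        set v := u ^ (2 ^ m) with hv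
        have hv4 : v ^ 4 = 1 := by
          rw [hv, ← pow_mul, ← h1]; congr 1; ring
        have hc := h.cen v (Y.pow_mem huY _) hv4 y⁻¹
        have hvi : y⁻¹ * v * y = v⁻¹ := by
          have := conj_pow (i := 2 ^ m) (a := y⁻¹) (b := u)
          rw [inv_inv, hinv, inv_pow] at this
          exact this.symm
        rw [hc] at hvi
        have : v * v = 1 := by
          rw [inv_mul_cancel_right] at hvi
          nth_rewrite 2 [hvi]; simp
        rw [pow_succ, pow_mul, ← hv, pow_two, this]
  exact key k (h.ex u huY)

/-- The elements of `Y` of order dividing two. -/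
def FC.om {W : Type} [Group W] {Y : Subgroup W} {k : ℕ} (h : FC Y k) : Subgroup W where
  carrier := {y | y ∈ Y ∧ y ^ 2 = 1}
  one_mem' := ⟨Y.one_mem, by simp⟩
  mul_mem' := by
    rintro a b ⟨ha, ha2⟩ ⟨hb, hb2⟩
    refine ⟨Y.mul_mem ha hb, ?_⟩
    have hc : a * b = b * a := h.cen b hb (by rw [show 4 = 2 * 2 from rfl, pow_mul, hb2, one_pow]) a
    have : Commute a b := hc
    rw [this.mul_pow, ha2, hb2, one_mul]
  inv_mem' := by
    rintro a ⟨ha, ha2⟩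
    exact ⟨Y.inv_mem ha, by rw [inv_pow, ha2, inv_one]⟩

lemma FC.om_normal {W : Type} [Group W] {Y : Subgroup W} {k : ℕ} (h : FC Y k) :
    h.om.Normal := by
  refine ⟨?_⟩
  rintro a ⟨ha, ha2⟩ g
  exact ⟨h.normal.conj_mem a ha g, by rw [conj_pow, ha2]; group⟩

lemma FC.om_cen {W : Type} [Group W] {Y : Subgroup W} {k : ℕ} (h : FC Y k) {u : W}
    (hu : u ∈ h.om) (w : W) : w * u = u * w :=
  h.cen u hu.1 (by rw [show 4 = 2 * 2 from rfl, pow_mul, hu.2, one_pow]) w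

lemma FC.quot {W : Type} [Group W] {Y : Subgroup W} {k : ℕ} (h : FC Y (k + 1))
    [h.om.Normal] : FC (Y.map (QuotientGroup.mk' h.om)) k := by
  refine ⟨?_, ?_, ?_⟩
  · exact Subgroup.Normal.map h.normal _ (QuotientGroup.mk'_surjective _)
  · rintro _ ⟨y, hy, rfl⟩ h4 w
    obtain ⟨w, rfl⟩ := QuotientGroup.mk'_surjective _ w
    rw [← map_pow, QuotientGroup.mk'_apply, QuotientGroup.eq_one_iff] at h4
    have h8 : y ^ 8 = 1 := by rw [show 8 = 4 * 2 from rfl, pow_mul]; exact h4.2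
    have hs := h.step y hy h8 w
    have hs' := h.step y hy h8 w⁻¹
    rw [← map_mul, ← map_mul, QuotientGroup.mk'_apply, QuotientGroup.mk'_apply, eq_comm,
      QuotientGroup.eq]
    have : (y * w)⁻¹ * (w * y) = w⁻¹ * (y⁻¹ * (w * y * w⁻¹)) * w⁻¹⁻¹ := by group
    rw [this]
    have hm : y⁻¹ * (w * y * w⁻¹) ∈ h.om :=
      ⟨Y.mul_mem (Y.inv_mem hy) (h.normal.conj_mem y hy w), hs⟩
    exact h.om_normal.conj_mem _ hm _
  · rintro _ ⟨y, hy, rfl⟩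
    rw [← map_pow, QuotientGroup.mk'_apply, QuotientGroup.eq_one_iff]
    exact ⟨Y.pow_mem hy _, by rw [← pow_mul, ← pow_succ]; exact h.ex y hy⟩

lemma conj_iter {W : Type} [Group W] {w y u : W} (hwu : w * u = u * w)
    (h : w * y * w⁻¹ = y * u) (n : ℕ) : w ^ n * y * (w ^ n)⁻¹ = y * u ^ n := by
  induction n with
  | zero => simp
  | succ n ih =>
    have hc : Commute w (u ^ n) := (show Commute w u from hwu).pow_right n
    calc w ^ (n + 1) * y * (w ^ (n + 1))⁻¹ = w * (w ^ n * y * (w ^ n)⁻¹) * w⁻¹ := by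
          rw [pow_succ']; group
      _ = w * y * (u ^ n) * w⁻¹ := by rw [ih]; group
      _ = w * y * w⁻¹ * u ^ n := by rw [mul_assoc, mul_assoc, mul_assoc, mul_assoc,
            (hc.inv_left).eq]
      _ = y * u ^ (n + 1) := by rw [h, pow_succ']; group

lemma pow_one_of_coprime {W : Type} [Group W] {u : W} {m n : ℕ} (h1 : u ^ m = 1) (h2 : u ^ n = 1)
    (hc : Nat.Coprime m n) : u = 1 := by
  rw [← orderOf_eq_one_iff]
  exact Nat.eq_one_of_dvd_coprimes hc (orderOf_dvd_of_pow_eq_one h1) (orderOf_dvd_of_pow_eq_one h2)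

lemma FC.odd (k : ℕ) : ∀ {W : Type} [Group W] {Y : Subgroup W}, FC Y k →
    ∀ (w : W) (n : ℕ), Odd n → w ^ n = 1 → ∀ y ∈ Y, w * y = y * w := by
  induction k with
  | zero =>
    intro W _ Y h w n _ _ y hy
    have := h.ex y hy
    simp at this
    simp [this]
  | succ k ih =>
    intro W _ Y h w n hn hw y hy
    have := h.om_normal
    have hq := ih h.quot (QuotientGroup.mk' h.om w) n hn (by rw [← map_pow, hw, map_one])
      (QuotientGroup.mk' h.om y) ⟨y, hy, rfl⟩
    rw [← map_mul, ← map_mul, QuotientGroup.mk'_apply, QuotientGroup.mk'_apply, eq_comm,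
      QuotientGroup.eq] at hq
    have hm : y⁻¹ * (w * y * w⁻¹) ∈ h.om := by
      have := h.om_normal.conj_mem _ hq w
      convert this using 1
      group
    set u := y⁻¹ * (w * y * w⁻¹) with hu
    have e : w * y * w⁻¹ = y * u := by rw [hu]; group
    have := conj_iter (h.om_cen hm w) e n
    rw [hw] at this
    have hun : u ^ n = 1 := by simpa using this
    have hu1 : u = 1 := pow_one_of_coprime hm.2 hun hn.coprime_two_left
    rw [hu1, mul_one, mul_inv_eq_iff_eq_mul] at e
    exact e

lemma FC.four (k : ℕ) : ∀ {W : Type} [Group W] {Y : Subgroup W}, FC Y k →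
    ∀ (x : W), x ^ 4 = 1 → ∀ y ∈ Y, (x * y) ^ 4 = 1 → y ^ 4 = 1 := by
  induction k with
  | zero =>
    intro W _ Y h x _ y hy _
    have := h.ex y hy
    simp at this
    simp [this]
  | succ k ih =>
    intro W _ Y h x hx y hy hxy
    have := h.om_normal
    have hq := ih h.quot (QuotientGroup.mk' h.om x) (by rw [← map_pow, hx, map_one])
      (QuotientGroup.mk' h.om y) ⟨y, hy, rfl⟩ (by rw [← map_mul, ← map_pow, hxy, map_one])
    rw [← map_pow, QuotientGroup.mk'_apply, QuotientGroup.eq_one_iff] at hq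
    have h8 : y ^ 8 = 1 := by rw [show 8 = 4 * 2 from rfl, pow_mul]; exact hq.2
    have hs := h.step y hy h8 x⁻¹
    have hm : y⁻¹ * (x⁻¹ * y * x⁻¹⁻¹) ∈ h.om :=
      ⟨Y.mul_mem (Y.inv_mem hy) (h.normal.conj_mem y hy _), hs⟩
    have huc := h.om_cen hm
    set u := y⁻¹ * (x⁻¹ * y * x⁻¹⁻¹) with hu
    have e : y * x = x * (y * u) := by rw [hu]; group
    have hu2 : u * u = 1 := by rw [← pow_two]; exact hs
    have e2 : (x * y) ^ 2 = x ^ 2 * y ^ 2 * u := by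
      calc (x * y) ^ 2 = x * (y * x) * y := by rw [pow_two]; group
        _ = x * (x * (y * (u * y))) := by rw [e]; group
        _ = x ^ 2 * y ^ 2 * u := by rw [← huc y, pow_two, pow_two]; group
    have hy2 : ∀ w : W, w * y ^ 2 = y ^ 2 * w :=
      h.cen _ (Y.pow_mem hy 2) (by rw [← pow_mul]; exact h8)
    have e4 : (x * y) ^ 4 = x ^ 4 * y ^ 4 := by
      calc (x * y) ^ 4 = (x ^ 2 * y ^ 2 * u) * (x ^ 2 * y ^ 2 * u) := by
            rw [← e2, ← pow_two, ← pow_mul]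
        _ = x ^ 2 * y ^ 2 * (x ^ 2 * y ^ 2) * (u * u) := by
            rw [mul_assoc (x ^ 2 * y ^ 2) u, ← mul_assoc u (x ^ 2 * y ^ 2),
              ← huc (x ^ 2 * y ^ 2)]; simp only [mul_assoc]
        _ = x ^ 2 * (y ^ 2 * x ^ 2) * y ^ 2 := by rw [hu2]; simp only [mul_assoc, mul_one]
        _ = x ^ 4 * y ^ 4 := by rw [← hy2 (x ^ 2)]; group
    rw [e4, hx, one_mul] at hxy
    exact hxy

/-- Alperin: existence of a good abelian normal subgroup of exponent dividing four. -/
lemma exists_good (P : Type) [Group P] [Finite P] (hP : IsPGroup 2 P) :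
    ∃ A : Subgroup P, A.Normal ∧ (∀ x ∈ A, ∀ y ∈ A, x * y = y * x) ∧ (∀ x ∈ A, x ^ 4 = 1) ∧
      ∀ x : P, (∀ a ∈ A, x * a = a * x) → x ^ 4 = 1 → x ∈ A := by
  let good : Set (Subgroup P) := {A | A.Normal ∧ (∀ x ∈ A, ∀ y ∈ A, x * y = y * x) ∧
    (∀ x ∈ A, x ^ 4 = 1)}
  have hne : good.Nonempty := ⟨⊥, inferInstance, by simp, by simp⟩
  obtain ⟨A, hA⟩ := (Set.toFinite good).exists_maximal hne
  obtain ⟨hAn, hAc, hA4⟩ := hA.1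
  refine ⟨A, hAn, hAc, hA4, ?_⟩
  obtain ⟨k, hk⟩ := hP.exists_card_eq
  have hex : ∀ y : P, y ^ (2 ^ k) = 1 := fun y => by rw [← hk]; exact pow_card_eq_one'
  have hnil : Group.IsNilpotent (P ⧸ A) := (hP.to_quotient A).isNilpotent
  have main : ∀ i : ℕ, ∀ x : P, (∀ a ∈ A, x * a = a * x) → x ^ 4 = 1 →
      (QuotientGroup.mk' A x) ∈ Subgroup.upperCentralSeries (P ⧸ A) i → x ∈ A := by
    intro i
    induction i with
    | zero =>
      intro x _ _ hx
      simpa using hx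
    | succ i ih =>
      intro x hxA hx4 hxi
      let C : Subgroup P := Subgroup.centralizer (A : Set P)
      have hCn : C.Normal := inferInstance
      have hC : ∀ z, z ∈ C ↔ ∀ a ∈ A, z * a = a * z := by
        intro z
        rw [Subgroup.mem_centralizer_iff]
        exact ⟨fun h a ha => (h a ha).symm, fun h a ha => (h a ha).symm⟩
      let Y0 : Subgroup P := (Subgroup.upperCentralSeries (P ⧸ A) i).comap (QuotientGroup.mk' A)
      have hfc : FC (Y0.subgroupOf C) k := by
        refine ⟨?_, ?_, ?_⟩
        · have : Y0.Normal := inferInstance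
          infer_instance
        · intro y hy hy4 w
          have hyA : (y : P) ∈ A :=
            ih y ((hC _).1 y.2) (by exact_mod_cast congrArg Subtype.val hy4) hy
          exact Subtype.ext ((hC _).1 w.2 _ hyA)
        · intro y _
          exact Subtype.ext (by push_cast; exact hex _)
      have hconj : ∀ g : P, x⁻¹ * (g * x * g⁻¹) ∈ A := by
        intro g
        have hxC : x ∈ C := (hC x).2 hxA
        have hgC : g * x * g⁻¹ ∈ C := hCn.conj_mem x hxC g
        have hyC : x⁻¹ * (g * x * g⁻¹) ∈ C := C.mul_mem (C.inv_mem hxC) hgC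
        have hyY : x⁻¹ * (g * x * g⁻¹) ∈ Y0 := by
          have hx' := (Subgroup.upperCentralSeries (P ⧸ A) (i+1)).inv_mem hxi
          have := (Subgroup.mem_upperCentralSeries_succ_iff.1 hx') (QuotientGroup.mk' A g)
          show QuotientGroup.mk' A (x⁻¹ * (g * x * g⁻¹)) ∈ Subgroup.upperCentralSeries (P ⧸ A) i
          simp only [map_mul, map_inv]
          simpa [mul_assoc, commutatorElement_def] using this
        have h4 := hfc.four (k := k) (x := ⟨x, hxC⟩) (Subtype.ext hx4) ⟨_, hyC⟩ hyY (by
          refine Subtype.ext ?_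
          show (x * (x⁻¹ * (g * x * g⁻¹))) ^ 4 = 1
          rw [mul_inv_cancel_left, conj_pow, hx4]; group)
        exact ih _ ((hC _).1 hyC) (congrArg Subtype.val h4) hyY
      -- enlarge A by x
      let B : Subgroup P := A ⊔ Subgroup.zpowers x
      have hBm : ∀ z ∈ B, ∃ a ∈ A, ∃ n : ℤ, z = a * x ^ n := by
        intro z hz
        obtain ⟨a, ha, b, ⟨n, rfl⟩, rfl⟩ := Subgroup.mem_sup_of_normal_left.1 hz
        exact ⟨a, ha, n, rfl⟩
      have hcx : ∀ a ∈ A, ∀ n : ℤ, Commute (x ^ n) a := fun a ha n =>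
        (show Commute x a from hxA a ha).zpow_left n
      have hBgood : B ∈ good := by
        refine ⟨⟨?_⟩, ?_, ?_⟩
        · intro z hz g
          obtain ⟨a, ha, n, rfl⟩ := hBm z hz
          have hgx : g * x * g⁻¹ ∈ B := by
            have := B.mul_mem (show x ∈ B from Subgroup.mem_sup_right (Subgroup.mem_zpowers x))
              (Subgroup.mem_sup_left (hconj g))
            rwa [mul_inv_cancel_left] at this
          have : g * (a * x ^ n) * g⁻¹ = (g * a * g⁻¹) * (g * x * g⁻¹) ^ n := by
            rw [conj_zpow]; group
          rw [this]
          exact B.mul_mem (Subgroup.mem_sup_left (hAn.conj_mem a ha g)) (B.zpow_mem hgx n)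
        · intro z hz z' hz'
          obtain ⟨a, ha, n, rfl⟩ := hBm z hz
          obtain ⟨a', ha', n', rfl⟩ := hBm z' hz'
          have h1 : Commute a a' := hAc a ha a' ha'
          have h2 : Commute (x ^ n) (x ^ n') := (Commute.refl x).zpow_zpow n n'
          exact (h1.mul_right (hcx a ha n').symm).mul_left ((hcx a' ha' n).mul_right h2)
        · intro z hz
          obtain ⟨a, ha, n, rfl⟩ := hBm z hz
          rw [(hcx a ha n).symm.mul_pow, hA4 a ha, one_mul, ← zpow_natCast, zpow_comm,
            zpow_natCast, hx4, one_zpow]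
      exact hA.2 hBgood le_sup_left (Subgroup.mem_sup_right (Subgroup.mem_zpowers x))
  intro x h1 h2
  refine main (Group.nilpotencyClass (P ⧸ A)) x h1 h2 ?_
  rw [Subgroup.upperCentralSeries_nilpotencyClass]
  trivial

/-- The conjugate `g P g⁻¹`. -/
def cj {G : Type} [Group G] (g : G) (P : Subgroup G) : Subgroup G :=
  P.map (MulAut.conj g).toMonoidHom

lemma mem_cj {G : Type} [Group G] {g x : G} {P : Subgroup G} :
    x ∈ cj g P ↔ g⁻¹ * x * g ∈ P := by
  constructor
  · rintro ⟨y, hy, rfl⟩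
    have : g⁻¹ * (g * y * g⁻¹) * g = y := by group
    simpa [this] using hy
  · intro h
    exact ⟨_, h, by simp [mul_assoc]⟩

lemma conj_mem_cj {G : Type} [Group G] {g x : G} {P : Subgroup G} (hx : x ∈ P) :
    g * x * g⁻¹ ∈ cj g P := ⟨x, hx, by simp⟩

lemma cj_le {G : Type} [Group G] {g : G} {P Q : Subgroup G} :
    cj g P ≤ Q ↔ ∀ x ∈ P, g * x * g⁻¹ ∈ Q := by
  constructor
  · intro h x hx
    exact h (conj_mem_cj hx)
  · rintro h _ ⟨x, hx, rfl⟩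
    simpa using h x hx

lemma cj_mul {G : Type} [Group G] (a b : G) (P : Subgroup G) :
    cj (a * b) P = cj a (cj b P) := by
  ext x
  simp only [mem_cj]
  rw [show (a * b)⁻¹ * x * (a * b) = b⁻¹ * (a⁻¹ * x * a) * b by group]

lemma cj_one {G : Type} [Group G] (P : Subgroup G) : cj 1 P = P := by
  ext x; simp [mem_cj]

lemma cj_mono {G : Type} [Group G] {g : G} {P Q : Subgroup G} (h : P ≤ Q) : cj g P ≤ cj g Q :=
  Subgroup.map_mono h

lemma cj_card {G : Type} [Group G] (g : G) (P : Subgroup G) : Nat.card (cj g P) = Nat.card P :=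
  Subgroup.card_map_of_injective (MulAut.conj g).injective

lemma cj_pgroup {G : Type} [Group G] {g : G} {P : Subgroup G} (h : IsPGroup 2 P) :
    IsPGroup 2 (cj g P) := h.map _

lemma cj_le_of_mem {G : Type} [Group G] {g : G} {P L : Subgroup G} (h : P ≤ L) (hg : g ∈ L) :
    cj g P ≤ L :=
  cj_le.2 fun _ hx => L.mul_mem (L.mul_mem hg (h hx)) (L.inv_mem hg)

lemma mem_norm {G : Type} [Group G] {g : G} {P : Subgroup G} :
    g ∈ Subgroup.normalizer (P : Set G) ↔ cj g P = P := by
  rw [Subgroup.mem_normalizer_iff_map_conj_eq]; rfl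

/-- The conjugation map by `z` on `P` is realized in `H`. -/
def InH {G : Type} [Group G] (H P : Subgroup G) (z : G) : Prop :=
  ∃ h ∈ H, ∀ x ∈ P, h * x * h⁻¹ = z * x * z⁻¹

lemma InH.of_mem {G : Type} [Group G] {H P : Subgroup G} {z : G} (h : z ∈ H) : InH H P z :=
  ⟨z, h, fun _ _ => rfl⟩

lemma InH.mono {G : Type} [Group G] {H P Q : Subgroup G} {z : G} (h : InH H Q z) (hPQ : P ≤ Q) :
    InH H P z := by
  obtain ⟨k, hk, hk'⟩ := h
  exact ⟨k, hk, fun x hx => hk' x (hPQ hx)⟩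

lemma InH.comp {G : Type} [Group G] {H P : Subgroup G} {z w : G} (h : InH H P z)
    (h' : InH H (cj z P) w) : InH H P (w * z) := by
  obtain ⟨k, hk, hk'⟩ := h
  obtain ⟨l, hl, hl'⟩ := h'
  refine ⟨l * k, H.mul_mem hl hk, fun x hx => ?_⟩
  calc l * k * x * (l * k)⁻¹ = l * (k * x * k⁻¹) * l⁻¹ := by group
    _ = w * (z * x * z⁻¹) * w⁻¹ := by rw [hk' x hx, hl' _ (conj_mem_cj hx)]
    _ = w * z * x * (w * z)⁻¹ := by group

lemma InH.inv {G : Type} [Group G] {H P : Subgroup G} {z : G} (h : InH H P z) :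
    InH H (cj z P) z⁻¹ := by
  obtain ⟨k, hk, hk'⟩ := h
  refine ⟨k⁻¹, H.inv_mem hk, fun x hx => ?_⟩
  have := hk' _ (mem_cj.1 hx)
  have e : x = k * (z⁻¹ * x * z) * k⁻¹ := by rw [this]; group
  calc k⁻¹ * x * k⁻¹⁻¹ = k⁻¹ * (k * (z⁻¹ * x * z) * k⁻¹) * k⁻¹⁻¹ := by rw [← e]
    _ = z⁻¹ * x * z⁻¹⁻¹ := by group

/-- `A` is a good abelian subgroup of `P`. -/
structure GA {G : Type} [Group G] (P A : Subgroup G) : Prop where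
  le : A ≤ P
  norm : ∀ x ∈ P, ∀ a ∈ A, x * a * x⁻¹ ∈ A
  comm : ∀ x ∈ A, ∀ y ∈ A, x * y = y * x
  four : ∀ x ∈ A, x ^ 4 = 1
  self : ∀ x ∈ P, (∀ a ∈ A, x * a = a * x) → x ^ 4 = 1 → x ∈ A

lemma exists_GA {G : Type} [Group G] [Finite G] (P : Subgroup G) (hP : IsPGroup 2 P) :
    ∃ A, GA P A := by
  obtain ⟨A, h1, h2, h3, h4⟩ := exists_good P hP
  refine ⟨A.map P.subtype, ?_, ?_, ?_, ?_, ?_⟩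
  · exact Subgroup.map_subtype_le A
  · rintro x hx _ ⟨a, ha, rfl⟩
    exact ⟨_, h1.conj_mem a ha ⟨x, hx⟩, rfl⟩
  · rintro _ ⟨a, ha, rfl⟩ _ ⟨b, hb, rfl⟩
    rw [← map_mul, h2 a ha b hb, map_mul]
  · rintro _ ⟨a, ha, rfl⟩
    rw [← map_pow, h3 a ha, map_one]
  · intro x hx hc h
    refine ⟨⟨x, hx⟩, h4 _ (fun a ha => Subtype.ext (hc a ⟨a, ha, rfl⟩)) (Subtype.ext h), rfl⟩

lemma pgroup_exp {G : Type} [Group G] [Finite G] {P : Subgroup G} (hP : IsPGroup 2 P) :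
    ∃ k : ℕ, ∀ x ∈ P, x ^ (2 ^ k) = 1 := by
  obtain ⟨k, hk⟩ := hP.exists_card_eq
  refine ⟨k, fun x hx => ?_⟩
  have : (⟨x, hx⟩ : P) ^ Nat.card P = 1 := pow_card_eq_one'
  rw [hk] at this
  exact congrArg Subtype.val this

lemma GA.odd_cent {G : Type} [Group G] [Finite G] {P A : Subgroup G} (h : GA P A)
    (hP : IsPGroup 2 P) (w : G) (hwP : cj w P = P) (hwA : ∀ a ∈ A, w * a = a * w)
    (n : ℕ) (hn : Odd n) (hw : w ^ n = 1) : ∀ x ∈ P, w * x = x * w := by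
  obtain ⟨k, hk⟩ := pgroup_exp hP
  let W : Subgroup G := Subgroup.normalizer (P : Set G) ⊓ Subgroup.centralizer (A : Set G)
  have hWA : ∀ z ∈ W, ∀ a ∈ A, z * a = a * z := fun z hz a ha =>
    (Subgroup.mem_centralizer_iff.1 hz.2 a ha).symm
  have hwW : w ∈ W := ⟨mem_norm.2 hwP,
    Subgroup.mem_centralizer_iff.2 fun a ha => (hwA a ha).symm⟩
  have hfc : FC (P.subgroupOf W) k := by
    refine ⟨⟨?_⟩, ?_, ?_⟩
    · intro x hx g
      exact (Subgroup.mem_normalizer_iff.1 g.2.1 _).1 hx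
    · intro y hy hy4 z
      have : (y : G) ∈ A := h.self y hy (hWA y y.2) (congrArg Subtype.val hy4)
      exact Subtype.ext (hWA z z.2 _ this)
    · intro y hy
      exact Subtype.ext (hk _ hy)
  have hcomm : ∀ u ∈ P, (∀ a ∈ A, u * a = a * u) → w * u = u * w := by
    intro u hu huA
    have huW : u ∈ W := ⟨Subgroup.le_normalizer hu,
      Subgroup.mem_centralizer_iff.2 fun a ha => (huA a ha).symm⟩
    exact congrArg Subtype.val (hfc.odd (k := k) ⟨w, hwW⟩ n hn (Subtype.ext hw) ⟨u, huW⟩ hu)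
  intro x hx
  have hwx : w * x * w⁻¹ ∈ P := by rw [← hwP]; exact conj_mem_cj hx
  have huP : x⁻¹ * (w * x * w⁻¹) ∈ P := P.mul_mem (P.inv_mem hx) hwx
  have huA : ∀ a ∈ A, x⁻¹ * (w * x * w⁻¹) * a = a * (x⁻¹ * (w * x * w⁻¹)) := by
    intro a ha
    have e1 : w⁻¹ * a = a * w⁻¹ := by
      rw [inv_mul_eq_iff_eq_mul, ← mul_assoc, hwA a ha, mul_inv_cancel_right]
    have e2 := hwA _ (h.norm x hx a ha)
    calc x⁻¹ * (w * x * w⁻¹) * a = x⁻¹ * w * x * (w⁻¹ * a) := by group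
      _ = x⁻¹ * (w * (x * a * x⁻¹)) * x * w⁻¹ := by rw [e1]; group
      _ = a * (x⁻¹ * (w * x * w⁻¹)) := by rw [e2]; group
  have e : w * x * w⁻¹ = x * (x⁻¹ * (w * x * w⁻¹)) := by group
  have := conj_iter (hcomm _ huP huA) e n
  rw [hw] at this
  have hun : (x⁻¹ * (w * x * w⁻¹)) ^ n = 1 := by
    simpa using this
  have hu1 := pow_one_of_coprime (hk _ huP) hun (Nat.Coprime.pow_left k hn.coprime_two_left)
  rw [hu1, mul_one, mul_inv_eq_iff_eq_mul] at e
  exact e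

lemma syl_conj {G : Type} [Group G] [Finite G] {L : Subgroup G} (T : Sylow 2 L)
    (R : Subgroup G) (hR : R ≤ L) (hR2 : IsPGroup 2 R) :
    ∃ l ∈ L, cj l R ≤ (T : Subgroup L).map L.subtype := by
  have h2 : IsPGroup 2 (R.subgroupOf L) := hR2.comap_subtype
  obtain ⟨Q, hQ⟩ := h2.exists_le_sylow
  obtain ⟨l, hl⟩ := MulAction.exists_smul_eq L Q T
  refine ⟨l, l.2, cj_le.2 fun x hx => ?_⟩
  have hxQ : (⟨x, hR hx⟩ : L) ∈ Q := hQ hx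
  refine ⟨l * ⟨x, hR hx⟩ * l⁻¹, ?_, rfl⟩
  rw [← hl]
  show _ ∈ ((l • Q : Sylow 2 L) : Subgroup L)
  rw [Sylow.coe_subgroup_smul]
  exact Subgroup.smul_mem_pointwise_smul _ (MulAut.conj l) _ hxQ

lemma exists_syl {G : Type} [Group G] [Finite G] {L : Subgroup G}
    (R : Subgroup G) (hR : R ≤ L) (hR2 : IsPGroup 2 R) :
    ∃ T : Subgroup G, R ≤ T ∧ T ≤ L ∧ IsPGroup 2 T ∧
      (∀ R' : Subgroup G, R' ≤ L → IsPGroup 2 R' → ∃ l ∈ L, cj l R' ≤ T) ∧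
      ¬ 2 ∣ T.relIndex L := by
  have h2 : IsPGroup 2 (R.subgroupOf L) := hR2.comap_subtype
  obtain ⟨Q, hQ⟩ := h2.exists_le_sylow
  refine ⟨(Q : Subgroup L).map L.subtype, ?_, Subgroup.map_subtype_le _, Q.2.map _,
    syl_conj Q, ?_⟩
  · intro x hx
    exact ⟨⟨x, hR hx⟩, hQ hx, rfl⟩
  · have : ((Q : Subgroup L).map L.subtype).subgroupOf L = Q :=
      Subgroup.comap_map_eq_self_of_injective L.subtype_injective _
    rw [Subgroup.relIndex, this]
    have : Fact (Nat.Prime 2) := ⟨Nat.prime_two⟩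
    exact Q.not_dvd_index

lemma factor {G : Type} [Group G] [Finite G] {N V P : Subgroup G}
    (hN : ∀ n ∈ N, cj n P = P) (hV : ¬ 2 ∣ V.relIndex N)
    (hp : ∀ n ∈ N, ∃ m : ℕ, ∀ x ∈ P, n ^ (2 ^ m) * x = x * n ^ (2 ^ m)) :
    ∀ n ∈ N, ∃ v ∈ V, ∀ x ∈ P, n * x * n⁻¹ = v * x * v⁻¹ := by
  have : Fact (Nat.Prime 2) := ⟨Nat.prime_two⟩
  let C : Subgroup N := (Subgroup.centralizer (P : Set G)).subgroupOf N
  have hC : ∀ z : N, z ∈ C ↔ ∀ x ∈ P, (z : G) * x = x * z := by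
    intro z
    refine Iff.trans Subgroup.mem_subgroupOf (Iff.trans Subgroup.mem_centralizer_iff ?_)
    exact ⟨fun h a ha => (h a ha).symm, fun h a ha => (h a ha).symm⟩
  have hCn : C.Normal := by
    refine ⟨fun c hc g => (hC _).2 fun x hx => ?_⟩
    have hx' : (g : G)⁻¹ * x * g ∈ P := by
      rw [← mem_cj, hN g g.2]; exact hx
    have e := (hC c).1 hc _ hx'
    push_cast
    calc (g : G) * c * (g : G)⁻¹ * x = g * (c * ((g : G)⁻¹ * x * g)) * (g : G)⁻¹ := by group
      _ = x * (g * c * (g : G)⁻¹) := by rw [e]; group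
  have hq : IsPGroup 2 (N ⧸ C) := by
    intro z
    obtain ⟨z, rfl⟩ := QuotientGroup.mk'_surjective C z
    obtain ⟨m, hm⟩ := hp z z.2
    refine ⟨m, ?_⟩
    rw [← map_pow, QuotientGroup.mk'_apply, QuotientGroup.eq_one_iff]
    exact (hC _).2 (by push_cast; exact hm)
  obtain ⟨j, hj⟩ := hq.exists_card_eq
  have htop : V.subgroupOf N ⊔ C = ⊤ := by
    rw [← Subgroup.index_eq_one]
    have d1 : (V.subgroupOf N ⊔ C).index ∣ V.relIndex N := Subgroup.index_dvd_of_le le_sup_left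
    have d2 : (V.subgroupOf N ⊔ C).index ∣ 2 ^ j := by
      rw [← hj]; exact Subgroup.index_dvd_of_le le_sup_right
    refine Nat.eq_one_of_dvd_coprimes ?_ d1 d2
    exact Nat.Coprime.pow_right j ((Nat.Prime.coprime_iff_not_dvd Nat.prime_two).2 hV).symm
  intro n hn
  have hmem : (⟨n, hn⟩ : N) ∈ V.subgroupOf N ⊔ C := by rw [htop]; trivial
  obtain ⟨v, hv, c, hc, hvc⟩ := Subgroup.mem_sup_of_normal_right.1 hmem
  refine ⟨v, hv, fun x hx => ?_⟩
  have hvc' : (v : G) * c = n := congrArg Subtype.val hvc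
  have e := (hC c).1 hc x hx
  rw [← hvc']
  calc (v : G) * c * x * (v * c : G)⁻¹ = v * (c * x) * (c : G)⁻¹ * (v : G)⁻¹ := by group
    _ = v * x * (v : G)⁻¹ := by rw [e]; group

lemma normalizer_grow {G : Type} [Group G] [Finite G] {Q T : Subgroup G} (hT : IsPGroup 2 T)
    (hQ : Q < T) : ∃ R : Subgroup G, Q < R ∧ R ≤ T ∧ ∀ r ∈ R, cj r Q = Q := by
  have : Fact (Nat.Prime 2) := ⟨Nat.prime_two⟩
  have hnil : Group.IsNilpotent T := hT.isNilpotent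
  have hlt : Q.subgroupOf T < ⊤ := by
    rw [lt_top_iff_ne_top, ne_eq, Subgroup.subgroupOf_eq_top]
    exact not_le_of_gt hQ
  have hn := Group.normalizerCondition_of_isNilpotent (Q.subgroupOf T) hlt
  obtain ⟨hle, r, hr, hrQ⟩ := SetLike.lt_iff_le_and_exists.1 hn
  refine ⟨T ⊓ Subgroup.normalizer (Q : Set G), ?_, inf_le_left, fun r hr => mem_norm.1 hr.2⟩
  refine SetLike.lt_iff_le_and_exists.2 ⟨le_inf hQ.le Subgroup.le_normalizer, (r : G),
    Subgroup.mem_inf.2 ⟨r.2, ?_⟩, hrQ⟩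
  rw [Subgroup.mem_normalizer_iff] at hr ⊢
  intro x
  constructor
  · intro hx
    exact (hr ⟨x, hQ.le hx⟩).1 hx
  · intro hx
    have hxT : x ∈ T := by
      have := T.mul_mem (T.mul_mem (T.inv_mem r.2) (hQ.le hx)) r.2
      convert this using 1; group
    exact (hr ⟨x, hxT⟩).2 hx

/-- The product of `P` with the centralizer of `A`. -/
def GA.L {G : Type} [Group G] {P A : Subgroup G} (h : GA P A) : Subgroup G where
  carrier := {z | ∃ q ∈ P, ∀ a ∈ A, z * a * z⁻¹ = q * a * q⁻¹}
  one_mem' := ⟨1, P.one_mem, fun _ _ => rfl⟩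
  mul_mem' := by
    rintro z z' ⟨q, hq, h1⟩ ⟨q', hq', h2⟩
    refine ⟨q * q', P.mul_mem hq hq', fun a ha => ?_⟩
    calc z * z' * a * (z * z')⁻¹ = z * (z' * a * z'⁻¹) * z⁻¹ := by group
      _ = q * (q' * a * q'⁻¹) * q⁻¹ := by rw [h2 a ha, h1 _ (h.norm q' hq' a ha)]
      _ = q * q' * a * (q * q')⁻¹ := by group
  inv_mem' := by
    rintro z ⟨q, hq, h1⟩
    refine ⟨q⁻¹, P.inv_mem hq, fun a ha => ?_⟩
    have := h1 _ (h.norm q⁻¹ (P.inv_mem hq) a ha)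
    calc z⁻¹ * a * z⁻¹⁻¹ = z⁻¹ * (q * (q⁻¹ * a * q⁻¹⁻¹) * q⁻¹) * z := by group
      _ = q⁻¹ * a * q⁻¹⁻¹ := by rw [← this]; group

lemma GA.le_L {G : Type} [Group G] {P A : Subgroup G} (h : GA P A) : P ≤ h.L :=
  fun q hq => ⟨q, hq, fun _ _ => rfl⟩

lemma GA.cent_mem_L {G : Type} [Group G] {P A : Subgroup G} (h : GA P A) {c : G}
    (hc : ∀ a ∈ A, c * a * c⁻¹ = a) : c ∈ h.L :=
  ⟨1, P.one_mem, fun a ha => by rw [hc a ha]; group⟩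

lemma GA.two_power {G : Type} [Group G] [Finite G] {P A : Subgroup G} (h : GA P A)
    (hP : IsPGroup 2 P) (z : G) (hz : z ∈ h.L) (hzP : cj z P = P) :
    ∃ m : ℕ, ∀ x ∈ P, z ^ (2 ^ m) * x = x * z ^ (2 ^ m) := by
  obtain ⟨k, hk⟩ := pgroup_exp hP
  obtain ⟨q, hq, hqa⟩ := hz
  have hpow : ∀ n : ℕ, ∀ a ∈ A, z ^ n * a * (z ^ n)⁻¹ = q ^ n * a * (q ^ n)⁻¹ := by
    intro n
    induction n with
    | zero => intro a _; simp
    | succ n ih =>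
      intro a ha
      calc z ^ (n + 1) * a * (z ^ (n + 1))⁻¹ = z ^ n * (z * a * z⁻¹) * (z ^ n)⁻¹ := by
            rw [pow_succ]; group
        _ = q ^ n * (q * a * q⁻¹) * (q ^ n)⁻¹ := by
            rw [hqa a ha, ih _ (h.norm q hq a ha)]
        _ = q ^ (n + 1) * a * (q ^ (n + 1))⁻¹ := by rw [pow_succ]; group
  have hcent : ∀ a ∈ A, z ^ (2 ^ k) * a = a * z ^ (2 ^ k) := by
    intro a ha
    have := hpow (2 ^ k) a ha
    rw [hk q hq] at this
    rw [← mul_inv_eq_iff_eq_mul, this]; simp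
  obtain ⟨j, n, hn, hord⟩ := Nat.exists_eq_two_pow_mul_odd (orderOf_pos z).ne'
  refine ⟨k + j, h.odd_cent hP _ ?_ ?_ n hn ?_⟩
  · exact mem_norm.1 (Subgroup.pow_mem _ (mem_norm.2 hzP) _)
  · intro a ha
    rw [pow_add, pow_mul]
    exact ((show Commute (z ^ (2 ^ k)) a from hcent a ha).pow_left _).eq
  · rw [← pow_mul, pow_add, mul_assoc, ← hord, mul_comm, pow_mul, pow_orderOf_eq_one, one_pow]

/-- Inductive step. -/
lemma main_step {G : Type} [Group G] [Finite G] (S : Sylow 2 G) (H : Subgroup G)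
    (hSH : (S : Subgroup G) ≤ H)
    (hyp : ∀ A : Subgroup G, A ≤ H → IsPGroup 2 A → (∀ x ∈ A, ∀ y ∈ A, x * y = y * x) →
      (∀ x ∈ A, x ^ 4 = 1) → ∀ g, cj g A ≤ H → InH H A g)
    (P : Subgroup G) (hP : IsPGroup 2 P) (hPH : P ≤ H)
    (ih : ∀ R : Subgroup G, IsPGroup 2 R → R ≤ H → Nat.card P < Nat.card R →
      ∀ g, cj g R ≤ H → InH H R g) (g : G) (hg : cj g P ≤ H) : InH H P g := by
  obtain ⟨A, hA⟩ := exists_GA P hP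
  have hA2 : IsPGroup 2 A := hP.to_le hA.le
  have hypA := hyp A (hA.le.trans hPH) hA2 hA.comm hA.four
  -- replace `g` by an element of the centralizer of `A`
  have red : ∀ x : G, cj x A ≤ H → ∃ h ∈ H, ∀ a ∈ A, (h⁻¹ * x) * a * (h⁻¹ * x)⁻¹ = a := by
    intro x hx
    obtain ⟨h, hh, h'⟩ := hypA x hx
    refine ⟨h, hh, fun a ha => ?_⟩
    calc (h⁻¹ * x) * a * (h⁻¹ * x)⁻¹ = h⁻¹ * (x * a * x⁻¹) * h := by group
      _ = a := by rw [← h' a ha]; group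
  obtain ⟨h0, hh0, hc⟩ := red g ((cj_mono hA.le).trans hg)
  set c := h0⁻¹ * g with hcdef
  have hcL : c ∈ hA.L := hA.cent_mem_L hc
  have hcP : cj c P ≤ H := by
    rw [hcdef, cj_mul]
    exact cj_le_of_mem hg (H.inv_mem hh0)
  suffices hs : InH H P c by
    have := hs.comp (w := h0) (InH.of_mem hh0)
    rwa [hcdef, mul_inv_cancel_left] at this
  -- a Sylow subgroup `T` of `L` inside `H`
  obtain ⟨T1, hPT1, hT1L, hT12, hT1s, -⟩ := exists_syl P hA.le_L hP
  obtain ⟨x, -, hx⟩ : ∃ x ∈ (⊤ : Subgroup G), cj x T1 ≤ (S : Subgroup G) := by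
    obtain ⟨Q, hQ⟩ := hT12.exists_le_sylow
    have : Fact (Nat.Prime 2) := ⟨Nat.prime_two⟩
    obtain ⟨l, hl⟩ := MulAction.exists_smul_eq G Q S
    refine ⟨l, trivial, ?_⟩
    rw [← hl]
    exact cj_mono hQ
  obtain ⟨h1, hh1, hc1⟩ := red x ((cj_mono (hA.le.trans hPT1)).trans (hx.trans hSH))
  set c1 := h1⁻¹ * x with hc1def
  have hc1L : c1 ∈ hA.L := hA.cent_mem_L hc1
  obtain ⟨T, hT⟩ : ∃ T, T = cj c1 T1 := ⟨_, rfl⟩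
  have hTH : T ≤ H := by
    rw [hT, hc1def, cj_mul]
    exact cj_le_of_mem (hx.trans hSH) (H.inv_mem hh1)
  have hTL : T ≤ hA.L := hT ▸ cj_le_of_mem hT1L hc1L
  have hT2 : IsPGroup 2 T := hT ▸ cj_pgroup hT12
  have hTs : ∀ R' : Subgroup G, R' ≤ hA.L → IsPGroup 2 R' → ∃ l ∈ hA.L, cj l R' ≤ T := by
    intro R' h1 h2
    obtain ⟨l, hl, hl'⟩ := hT1s R' h1 h2
    refine ⟨c1 * l, hA.L.mul_mem hc1L hl, ?_⟩
    rw [cj_mul, hT]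
    exact cj_mono hl'
  have hTK : ∀ R' : Subgroup G, R' ≤ hA.L → R' ≤ H → IsPGroup 2 R' →
      ∃ l ∈ hA.L ⊓ H, cj l R' ≤ T := by
    obtain ⟨T2, hTT2, hT2K, hT22, hT2s, -⟩ := exists_syl (L := hA.L ⊓ H) T (le_inf hTL hTH) hT2
    have : T = T2 := by
      obtain ⟨l, _, hl⟩ := hTs T2 (hT2K.trans inf_le_left) hT22
      refine Subgroup.eq_of_le_of_card_ge hTT2 ?_
      rw [← cj_card l T2]
      exact Subgroup.card_le_of_le hl
    subst this
    intro R' h1 h2 h3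
    exact hT2s R' (le_inf h1 h2) h3
  -- a Sylow subgroup `V` of the normalizer of `P` in `L`
  obtain ⟨V, hPV, hVN, hV2, hVs, hVi⟩ :=
    exists_syl (L := hA.L ⊓ Subgroup.normalizer (P : Set G)) P
      (le_inf hA.le_L Subgroup.le_normalizer) hP
  obtain ⟨y, hyL, hyV⟩ := hTs V (hVN.trans inf_le_left) hV2
  -- every `L`-conjugate of `P` in `H` moves to `cj y P` inside `H`
  have claim : ∀ z ∈ hA.L, cj z P ≤ H →
      ∃ x ∈ hA.L, cj x (cj z P) = cj y P ∧ InH H (cj z P) x := by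
    intro z hz hzH
    obtain ⟨k, ⟨hkL, hkH⟩, hkT⟩ := hTK (cj z P) (cj_le_of_mem hA.le_L hz) hzH (cj_pgroup hP)
    by_cases hEq : cj k (cj z P) = T
    · refine ⟨k, hkL, ?_, InH.of_mem hkH⟩
      rw [hEq]
      symm
      refine Subgroup.eq_of_le_of_card_ge ((cj_mono hPV).trans hyV) ?_
      rw [← hEq]
      simp only [cj_card]
      exact le_rfl
    · obtain ⟨R, hQR, hRT, hRn⟩ := normalizer_grow hT2 (lt_of_le_of_ne hkT hEq)
      have hR2 : IsPGroup 2 R := hT2.to_le hRT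
      have hkzL : k * z ∈ hA.L := hA.L.mul_mem hkL hz
      have hRN : cj (k * z)⁻¹ R ≤ hA.L ⊓ Subgroup.normalizer (P : Set G) := by
        refine le_inf (cj_le_of_mem (hRT.trans hTL) (hA.L.inv_mem hkzL)) ?_
        refine cj_le.2 fun r hr => mem_norm.2 ?_
        have h1 := hRn r hr
        rw [← cj_mul k z] at h1
        rw [cj_mul, cj_mul, inv_inv, h1, ← cj_mul, inv_mul_cancel, cj_one]
      obtain ⟨n, ⟨hnL, hnP⟩, hn⟩ := hVs _ hRN (cj_pgroup hR2)
      have hxR : cj (y * n * (k * z)⁻¹) R ≤ H := by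
        rw [cj_mul, cj_mul]
        exact (cj_mono hn).trans (hyV.trans hTH)
      have hcard : Nat.card P < Nat.card R := by
        rw [← cj_card z P, ← cj_card k]
        have := Set.Finite.subset (Set.toFinite (R : Set G)) (le_refl _)
        exact Set.ncard_lt_ncard (SetLike.coe_ssubset_coe.2 hQR) this
      have hin := (ih R hR2 (hRT.trans hTH) hcard _ hxR).mono hQR.le
      refine ⟨y * n * (k * z)⁻¹ * k, ?_, ?_, (InH.of_mem hkH).comp hin⟩
      · exact hA.L.mul_mem (hA.L.mul_mem (hA.L.mul_mem hyL hnL) (hA.L.inv_mem hkzL)) hkL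
      · rw [← cj_mul, show y * n * (k * z)⁻¹ * k * z = y * n by group, cj_mul,
          mem_norm.1 hnP]
  obtain ⟨xQ, hxQL, hxQ, hxQH⟩ := claim c hcL hcP
  obtain ⟨xP, hxPL, hxP, hxPH⟩ := claim 1 hA.L.one_mem (by rw [cj_one]; exact hPH)
  rw [cj_one] at hxP hxPH
  have hn : y⁻¹ * (xQ * c * xP⁻¹) * y ∈ hA.L ⊓ Subgroup.normalizer (P : Set G) := by
    refine ⟨?_, mem_norm.2 ?_⟩
    · exact hA.L.mul_mem (hA.L.mul_mem (hA.L.inv_mem hyL) (hA.L.mul_mem (hA.L.mul_mem hxQL hcL)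
        (hA.L.inv_mem hxPL))) hyL
    · have e1 : cj xP⁻¹ (cj y P) = P := by rw [← hxP, ← cj_mul, inv_mul_cancel, cj_one]
      rw [cj_mul, cj_mul, cj_mul, cj_mul, e1, hxQ, ← cj_mul, inv_mul_cancel, cj_one]
  obtain ⟨v, hv, hvP⟩ := factor (N := hA.L ⊓ Subgroup.normalizer (P : Set G)) (P := P)
    (fun n hn => mem_norm.1 hn.2) hVi
    (fun n hn => hA.two_power hP n hn.1 (mem_norm.1 hn.2)) _ hn
  have hmid : InH H (cj xP P) (xQ * c * xP⁻¹) := by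
    rw [hxP]
    refine ⟨y * v * y⁻¹, hTH (hyV (conj_mem_cj hv)), fun t ht => ?_⟩
    have := hvP _ (mem_cj.1 ht)
    calc y * v * y⁻¹ * t * (y * v * y⁻¹)⁻¹ = y * (v * (y⁻¹ * t * y) * v⁻¹) * y⁻¹ := by group
      _ = xQ * c * xP⁻¹ * t * (xQ * c * xP⁻¹)⁻¹ := by rw [← this]; group
  have h2 := hxPH.comp hmid
  have h3 := hxQH.inv
  rw [← cj_mul] at h3
  rw [inv_mul_cancel_right] at h2
  have h4 := h2.comp h3
  rwa [inv_mul_cancel_left] at h4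

lemma main_all {G : Type} [Group G] [Finite G] (S : Sylow 2 G) (H : Subgroup G)
    (hSH : (S : Subgroup G) ≤ H)
    (hyp : ∀ A : Subgroup G, A ≤ H → IsPGroup 2 A → (∀ x ∈ A, ∀ y ∈ A, x * y = y * x) →
      (∀ x ∈ A, x ^ 4 = 1) → ∀ g, cj g A ≤ H → InH H A g) (n : ℕ) :
    ∀ P : Subgroup G, IsPGroup 2 P → P ≤ H → Nat.card G ≤ Nat.card P + n →
      ∀ g, cj g P ≤ H → InH H P g := by
  induction n with
  | zero =>
    intro P hP hPH hn g hg
    refine main_step S H hSH hyp P hP hPH (fun R _ _ hc => ?_) g hg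
    have := Subgroup.card_le_card_group R
    omega
  | succ n ih =>
    intro P hP hPH hn g hg
    exact main_step S H hSH hyp P hP hPH (fun R h1 h2 hc => ih R h1 h2 (by omega)) g hg

end FourFusion


/-- **Control of 2-fusion detected on abelian subgroups of exponent at most 4.**
If `H` contains a Sylow `2`-subgroup `S` of the finite group `G` and the
`G`-fusion on abelian subgroups of `S` of exponent dividing `4` is realized in `H`,
then `H` controls `2`-fusion in `G`. -/
theorem abelian_exponent_four_control_two_fusion
    (G : Type) [Group G] [Finite G] (S : Sylow 2 G) (H : Subgroup G)
    (hSH : (S : Subgroup G) ≤ H)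
    (hyp : ∀ A B : Subgroup G, A ≤ (S : Subgroup G) → B ≤ (S : Subgroup G) →
      (∀ x ∈ A, ∀ y ∈ A, x * y = y * x) → (∀ x ∈ A, x ^ 4 = 1) →
      (∀ x ∈ B, ∀ y ∈ B, x * y = y * x) → (∀ x ∈ B, x ^ 4 = 1) →
      ∀ g : G, (∀ x ∈ A, g * x * g⁻¹ ∈ B) →
        ∃ h ∈ H, ∀ x ∈ A, h * x * h⁻¹ = g * x * g⁻¹) :
    ∀ P Q : Subgroup G, P ≤ (S : Subgroup G) → Q ≤ (S : Subgroup G) →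
      ∀ g : G, (∀ x ∈ P, g * x * g⁻¹ ∈ Q) →
        ∃ h ∈ H, ∀ x ∈ P, h * x * h⁻¹ = g * x * g⁻¹ := by

  intro P Q hP hQ g hg
  have hyp' : ∀ A : Subgroup G, A ≤ H → IsPGroup 2 A → (∀ x ∈ A, ∀ y ∈ A, x * y = y * x) →
      (∀ x ∈ A, x ^ 4 = 1) → ∀ g, FourFusion.cj g A ≤ H → FourFusion.InH H A g := by
    intro A hAH hA2 hAc hA4 g hg
    have hS : ((S.subtype hSH : Sylow 2 H) : Subgroup H).map H.subtype = (S : Subgroup G) := by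
      rw [Sylow.coe_subtype, Subgroup.map_subgroupOf_eq_of_le hSH]
    obtain ⟨a, ha, haS⟩ := FourFusion.syl_conj (S.subtype hSH) A hAH hA2
    obtain ⟨b, hb, hbS⟩ := FourFusion.syl_conj (S.subtype hSH) _ hg (FourFusion.cj_pgroup hA2)
    rw [hS] at haS hbS
    have tr : ∀ z : G, (∀ x ∈ FourFusion.cj z A, ∀ y ∈ FourFusion.cj z A, x * y = y * x) ∧
        (∀ x ∈ FourFusion.cj z A, x ^ 4 = 1) := by
      intro z
      refine ⟨?_, ?_⟩
      · rintro _ ⟨x, hx, rfl⟩ _ ⟨y, hy, rfl⟩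
        rw [← map_mul, hAc x hx y hy, map_mul]
      · rintro _ ⟨x, hx, rfl⟩
        rw [← map_pow, hA4 x hx, map_one]
    have e : FourFusion.cj (b * g * a⁻¹) (FourFusion.cj a A) = FourFusion.cj (b * g) A := by
      rw [← FourFusion.cj_mul, inv_mul_cancel_right]
    rw [← FourFusion.cj_mul] at hbS
    have key : FourFusion.InH H (FourFusion.cj a A) (b * g * a⁻¹) :=
      hyp _ _ haS hbS (tr a).1 (tr a).2 (tr (b * g)).1 (tr (b * g)).2 (b * g * a⁻¹)
        (FourFusion.cj_le.1 e.le)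
    have h1 := (FourFusion.InH.of_mem (P := A) ha).comp key
    rw [inv_mul_cancel_right] at h1
    have h2 := h1.comp (FourFusion.InH.of_mem (H.inv_mem hb))
    rwa [← mul_assoc, inv_mul_cancel, one_mul] at h2
  exact FourFusion.main_all S H hSH hyp' (Nat.card G) P (S.2.to_le hP) (hP.trans hSH)
    (by omega) g (FourFusion.cj_le.2 fun x hx => hSH (hQ (hg x hx)))
end

section
/- Let p be a prime, φ: H → G a homomorphism of finite groups, and n ≥ 1 a natural number with n ≥ min{rk_p(G), rk_p(H) + 1}. Suppose that for every finite abelian p-group A of rank exactly n, composition with φ induces a bijection Rep(A,H) → Rep(A,G). Then rk_p(G) = rk_p(H), and for every finite abelian p-group A (of arbitrary rank) composition with φ induces a bijection Rep(A,H) → Rep(A,G). -/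
/-- `Rep A G`: homomorphisms `A →* G` up to conjugation in `G`. -/
def GroupRep (A G : Type) [Group A] [Group G] : Type :=
  Quot (fun f f' : A →* G => ∃ g : G, ∀ a : A, f' a = g * f a * g⁻¹)

/-- The map `Rep A H → Rep A G` induced by composition with `φ : H →* G`. -/
def GroupRep.map {A H G : Type} [Group A] [Group H] [Group G] (φ : H →* G) :
    GroupRep A H → GroupRep A G :=
  Quot.map (fun f => φ.comp f)
    (by
      rintro f f' ⟨h, hh⟩
      exact ⟨φ h, fun a => by simp [MonoidHom.comp_apply, hh a, map_mul, map_inv]⟩)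

/-- The minimal number of generators of a group `A`. -/
noncomputable def genRank (A : Type) [Group A] : ℕ :=
  sInf {n : ℕ | ∃ s : Finset A, s.card = n ∧ Subgroup.closure (s : Set A) = ⊤}

/-- The `p`-rank of `G`: the largest `r` such that `G` has an elementary abelian
`p`-subgroup of order `p ^ r`. -/
noncomputable def pRank (p : ℕ) (G : Type) [Group G] : ℕ :=
  sSup {r : ℕ | ∃ E : Subgroup G, (∀ x ∈ E, ∀ y ∈ E, x * y = y * x) ∧
    (∀ x ∈ E, x ^ p = 1) ∧ Nat.card E = p ^ r}

namespace RepAux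

/-- Concrete form of bijectivity of `GroupRep.map φ`. -/
def Bij {H G : Type} [Group H] [Group G] (φ : H →* G) (A : Type) [Group A] : Prop :=
  (∀ f f' : A →* H, (∃ g : G, ∀ a, φ (f' a) = g * φ (f a) * g⁻¹) →
    ∃ h : H, ∀ a, f' a = h * f a * h⁻¹) ∧
  (∀ f : A →* G, ∃ f' : A →* H, ∃ g : G, ∀ a, f a = g * φ (f' a) * g⁻¹)

theorem conj_equiv (A G : Type) [Group A] [Group G] :
    Equivalence (fun f f' : A →* G => ∃ g : G, ∀ a : A, f' a = g * f a * g⁻¹) := by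
  refine ⟨fun f => ⟨1, fun a => by simp⟩, ?_, ?_⟩
  · rintro f f' ⟨g, hg⟩
    exact ⟨g⁻¹, fun a => by rw [hg a]; group⟩
  · rintro f f' f'' ⟨g, hg⟩ ⟨k, hk⟩
    exact ⟨k * g, fun a => by rw [hk a, hg a]; group⟩

theorem mk_eq_iff {A G : Type} [Group A] [Group G] (f f' : A →* G) :
    (Quot.mk _ f : GroupRep A G) = Quot.mk _ f' ↔ ∃ g : G, ∀ a : A, f' a = g * f a * g⁻¹ := by
  constructor
  · intro h
    exact (conj_equiv A G).eqvGen_iff.1 (Quot.eqvGen_exact h)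
  · intro h
    exact Quot.sound h

theorem bij_iff {H G : Type} [Group H] [Group G] (φ : H →* G) (A : Type) [Group A] :
    Function.Bijective (GroupRep.map (A := A) φ) ↔ Bij φ A := by
  constructor
  · rintro ⟨hi, hs⟩
    refine ⟨fun f f' h => ?_, fun f => ?_⟩
    · have : GroupRep.map φ (Quot.mk _ f : GroupRep A H) = GroupRep.map φ (Quot.mk _ f') :=
        (mk_eq_iff (φ.comp f) (φ.comp f')).2 h
      exact (mk_eq_iff f f').1 (hi this)
    · obtain ⟨x, hx⟩ := hs (Quot.mk _ f)
      obtain ⟨f', rfl⟩ := Quot.exists_rep x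
      exact ⟨f', (mk_eq_iff (φ.comp f') f).1 hx⟩
  · rintro ⟨hi, hs⟩
    refine ⟨fun x y h => ?_, fun y => ?_⟩
    · obtain ⟨f, rfl⟩ := Quot.exists_rep x
      obtain ⟨f', rfl⟩ := Quot.exists_rep y
      exact (mk_eq_iff f f').2 (hi f f' ((mk_eq_iff (φ.comp f) (φ.comp f')).1 h))
    · obtain ⟨f, rfl⟩ := Quot.exists_rep y
      obtain ⟨f', h⟩ := hs f
      exact ⟨Quot.mk _ f', (mk_eq_iff (φ.comp f') f).2 h⟩

theorem Bij.retract {H G : Type} [Group H] [Group G] {φ : H →* G} {A B : Type} [Group A] [Group B]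
    (i : A →* B) (r : B →* A) (hr : ∀ a, r (i a) = a) (h : Bij φ B) : Bij φ A := by
  refine ⟨fun f f' ⟨g, hg⟩ => ?_, fun f => ?_⟩
  · obtain ⟨k, hk⟩ := h.1 (f.comp r) (f'.comp r) ⟨g, fun b => hg (r b)⟩
    exact ⟨k, fun a => by simpa [hr] using hk (i a)⟩
  · obtain ⟨f', g, hg⟩ := h.2 (f.comp r)
    exact ⟨f'.comp i, g, fun a => by simpa [hr] using hg (i a)⟩

/-- Order of the `p`-torsion. -/
theorem card_quot_eq (p : ℕ) (B : Type) [CommGroup B] [Finite B] :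
    Nat.card (B ⧸ (powMonoidHom p : B →* B).range) = Nat.card (powMonoidHom p : B →* B).ker := by
  have h1 := Subgroup.card_eq_card_quotient_mul_card_subgroup (powMonoidHom p : B →* B).range
  have h2 := Subgroup.card_eq_card_quotient_mul_card_subgroup (powMonoidHom p : B →* B).ker
  have h3 : Nat.card (B ⧸ (powMonoidHom p : B →* B).ker) =
      Nat.card (powMonoidHom p : B →* B).range :=
    Nat.card_congr (QuotientGroup.quotientKerEquivRange (powMonoidHom p : B →* B)).toEquiv
  rw [h3, h1, mul_comm] at h2
  exact Nat.eq_of_mul_eq_mul_left Nat.card_pos h2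

theorem closure_eq_top_of_sup (p : ℕ) [Fact p.Prime] (B : Type) [CommGroup B] [Finite B]
    (hB : IsPGroup p B) (K : Subgroup B) (h : K ⊔ (powMonoidHom p : B →* B).range = ⊤) :
    K = ⊤ := by
  have hQ : IsPGroup p (B ⧸ K) := hB.to_quotient K
  have hs : Function.Surjective (fun x : B ⧸ K => x ^ p) := by
    intro y
    obtain ⟨b, rfl⟩ := QuotientGroup.mk_surjective y
    have hb : b ∈ K ⊔ (powMonoidHom p : B →* B).range := h ▸ Subgroup.mem_top b
    obtain ⟨k, hk, z, ⟨c, rfl⟩, rfl⟩ := Subgroup.mem_sup.1 hb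
    refine ⟨(c : B ⧸ K), ?_⟩
    have : (k : B ⧸ K) = 1 := (QuotientGroup.eq_one_iff k).2 hk
    simp [this]
  have hi : Function.Injective (fun x : B ⧸ K => x ^ p) := Finite.injective_iff_surjective.2 hs
  have hk : ∀ (k : ℕ) (x : B ⧸ K), x ^ p ^ k = 1 → x = 1 := by
    intro k
    induction k with
    | zero => intro x hx; simpa using hx
    | succ k ih =>
      intro x hx
      apply ih
      apply hi
      simpa [← pow_mul, ← pow_succ] using hx
  rw [eq_top_iff]
  intro b _
  obtain ⟨k, hx⟩ := hQ (b : B ⧸ K)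
  exact (QuotientGroup.eq_one_iff b).1 (hk k _ hx)

theorem genRank_eq_aux (p : ℕ) [Fact p.Prime] (B : Type) [CommGroup B] [Finite B]
    (hB : IsPGroup p B) (d : ℕ) (V : Type) [AddCommGroup V] [Module (ZMod p) V] [Finite V]
    (h1 : Nat.card V = p ^ d) (π : B → V) (hπs : Function.Surjective π)
    (hone : π 1 = 0) (hmul : ∀ x y, π (x * y) = π x + π y) (hinv : ∀ x, π x⁻¹ = - π x)
    (hpow : ∀ x (m : ℕ), π (x ^ m) = m • π x)
    (hRk : ∀ b c, π b = π c → c⁻¹ * b ∈ (powMonoidHom p : B →* B).range) :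
    genRank B = d := by
  set R := (powMonoidHom p : B →* B).range with hR
  have hp : p.Prime := Fact.out
  have hfin : Module.finrank (ZMod p) V = d := by
    have h2 := Module.natCard_eq_pow_finrank (K := ZMod p) (V := V)
    rw [h1, Nat.card_zmod] at h2
    exact (Nat.pow_right_injective hp.two_le h2).symm
  -- membership transfer
  have key : ∀ s : Set B, Submodule.span (ZMod p) (π '' s) = ⊤ ↔ Subgroup.closure s = ⊤ := by
    intro s
    constructor
    · intro h
      apply closure_eq_top_of_sup p B hB
      rw [eq_top_iff]
      intro b _
      have hb : π b ∈ Submodule.span (ZMod p) (π '' s) := h ▸ Submodule.mem_top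
      suffices ∀ v ∈ Submodule.span (ZMod p) (π '' s), ∀ b, π b = v →
          b ∈ Subgroup.closure s ⊔ R from this _ hb b rfl
      intro v hv
      have hRm : ∀ b c : B, π b = π c → c ∈ Subgroup.closure s ⊔ R → b ∈ Subgroup.closure s ⊔ R := by
        intro b c hbc hc
        have h2 : c⁻¹ * b ∈ R := hRk b c hbc
        have := mul_mem hc (Subgroup.mem_sup_right (S := Subgroup.closure s) h2)
        simpa using this
      induction hv using Submodule.span_induction with
      | mem x hx =>
        obtain ⟨c, hc, rfl⟩ := hx
        intro b hb
        exact hRm b c hb (Subgroup.mem_sup_left (Subgroup.subset_closure hc))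
      | zero =>
        intro b hb
        exact hRm b 1 (hb.trans hone.symm) (one_mem _)
      | add x y _ _ hx hy =>
        obtain ⟨x, rfl⟩ := hπs x
        obtain ⟨y, rfl⟩ := hπs y
        intro b hb
        exact hRm b (x * y) (hb.trans (hmul x y).symm) (mul_mem (hx x rfl) (hy y rfl))
      | smul a x _ hx =>
        obtain ⟨x, rfl⟩ := hπs x
        intro b hb
        obtain ⟨m, rfl⟩ := ZMod.natCast_zmod_surjective (n := p) a
        refine hRm b (x ^ m) ?_ (pow_mem (hx x rfl) m)
        rw [hb, Nat.cast_smul_eq_nsmul, hpow]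
    · intro h
      rw [Submodule.eq_top_iff']
      intro v
      obtain ⟨b, rfl⟩ := hπs v
      have hb : b ∈ Subgroup.closure s := h ▸ Subgroup.mem_top b
      induction hb using Subgroup.closure_induction with
      | mem x hx => exact Submodule.subset_span ⟨x, hx, rfl⟩
      | one => rw [hone]; exact zero_mem _
      | mul x y _ _ hx hy => rw [hmul]; exact add_mem hx hy
      | inv x _ hx => rw [hinv]; exact neg_mem hx
  classical
  unfold genRank
  have hmem : d ∈ {n : ℕ | ∃ s : Finset B, s.card = n ∧ Subgroup.closure (s : Set B) = ⊤} := by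
    let b := Module.finBasisOfFinrankEq (ZMod p) V hfin
    let t : Fin d → B := fun i => Function.surjInv hπs (b i)
    have ht : ∀ i, π (t i) = b i := fun i => Function.surjInv_eq hπs (b i)
    have htinj : Function.Injective t := fun i j h => b.injective (by rw [← ht, ← ht, h])
    refine ⟨Finset.univ.image t, ?_, ?_⟩
    · rw [Finset.card_image_of_injective _ htinj]; simp
    · rw [← key]
      have : π '' ((Finset.univ.image t : Finset B) : Set B) = Set.range b := by
        rw [Finset.coe_image, Finset.coe_univ, Set.image_univ, ← Set.range_comp]
        congr 1
        funext i
        exact ht i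
      rw [this, b.span_eq]
  apply le_antisymm (Nat.sInf_le hmem)
  apply le_csInf ⟨d, hmem⟩
  rintro m ⟨s, rfl, hs⟩
  rw [← key] at hs
  have h1 := finrank_span_finset_le_card (R := ZMod p) (s.image π)
  rw [Finset.coe_image, Set.finrank, hs, finrank_top, hfin] at h1
  exact h1.trans Finset.card_image_le

theorem genRank_eq (p : ℕ) [Fact p.Prime] (B : Type) [CommGroup B] [Finite B]
    (hB : IsPGroup p B) (d : ℕ) (hd : Nat.card (powMonoidHom p : B →* B).ker = p ^ d) :
    genRank B = d := by
  let R := (powMonoidHom p : B →* B).range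
  let _ : Module (ZMod p) (Additive (B ⧸ R)) := AddCommGroup.zmodModule (n := p) (by
    intro x
    obtain ⟨b, hb⟩ := QuotientGroup.mk_surjective x.toMul
    change x.toMul ^ p = 1
    rw [← hb, ← QuotientGroup.mk_pow]
    exact (QuotientGroup.eq_one_iff _).2 ⟨b, rfl⟩)
  have : Finite (Additive (B ⧸ R)) := inferInstanceAs (Finite (B ⧸ R))
  refine genRank_eq_aux p B hB d (Additive (B ⧸ R)) ?_ (fun b => Additive.ofMul (b : B ⧸ R))
    (fun v => QuotientGroup.mk_surjective v.toMul) rfl (fun _ _ => rfl) (fun _ => rfl)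
    (fun _ _ => rfl) ?_
  · rw [← hd, ← card_quot_eq]; rfl
  · intro b c h
    have h1 : (c : B ⧸ R) = (b : B ⧸ R) := (Additive.ofMul.injective h).symm
    exact QuotientGroup.eq.1 h1

theorem bij_of_card (p : ℕ) [Fact p.Prime] {H G : Type} [Group H] [Group G]
    (φ : H →* G) (n : ℕ)
    (hbij : ∀ (A : Type) [Group A] [Finite A], IsPGroup p A →
      (∀ a b : A, a * b = b * a) → genRank A = n →
      Function.Bijective (GroupRep.map (A := A) φ))
    (A : Type) [CommGroup A] [Finite A] (hA : IsPGroup p A) (d : ℕ) (hdn : d ≤ n)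
    (hd : Nat.card (powMonoidHom p : A →* A).ker = p ^ d) : Bij φ A := by
  let C := Fin (n - d) → Multiplicative (ZMod p)
  have hp : p.Prime := Fact.out
  have : NeZero p := ⟨hp.ne_zero⟩
  have : Finite (Multiplicative (ZMod p)) := inferInstanceAs (Finite (ZMod p))
  have hC : ∀ c : C, c ^ p = 1 := by
    intro c
    funext i
    change (p : ℕ) • (c i).toAdd = 0
    rw [← Nat.cast_smul_eq_nsmul (ZMod p)]
    simp
  have hCcard : Nat.card C = p ^ (n - d) := by
    rw [Nat.card_pi]
    have : Nat.card (Multiplicative (ZMod p)) = p := Nat.card_zmod p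
    simp [this]
  have hB : IsPGroup p (A × C) := by
    rintro ⟨a, c⟩
    obtain ⟨k, hk⟩ := hA a
    refine ⟨k + 1, ?_⟩
    rw [Prod.pow_mk, pow_succ p k, pow_mul, hk, one_pow, mul_comm, pow_mul, hC, one_pow]
    rfl
  have hcard : Nat.card (powMonoidHom p : A × C →* A × C).ker = p ^ n := by
    have e : (powMonoidHom p : A × C →* A × C).ker ≃ (powMonoidHom p : A →* A).ker × C :=
      { toFun := fun x => (⟨x.1.1, congrArg Prod.fst x.2⟩, x.1.2)
        invFun := fun y => ⟨(y.1.1, y.2), Prod.ext y.1.2 (hC y.2)⟩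
        left_inv := fun _ => rfl
        right_inv := fun _ => rfl }
    rw [Nat.card_congr e, Nat.card_prod, hd, hCcard, ← pow_add, Nat.add_sub_cancel' hdn]
  have := hbij (A × C) hB (fun a b => mul_comm a b) (genRank_eq p _ hB n hcard)
  exact Bij.retract (MonoidHom.inl A C) (MonoidHom.fst A C) (fun _ => rfl) ((bij_iff φ _).1 this)

theorem pRank_bdd (p : ℕ) [Fact p.Prime] (G : Type) [Group G] [Finite G] :
    BddAbove {r : ℕ | ∃ E : Subgroup G, (∀ x ∈ E, ∀ y ∈ E, x * y = y * x) ∧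
    (∀ x ∈ E, x ^ p = 1) ∧ Nat.card E = p ^ r} := by
  have hp : p.Prime := Fact.out
  refine ⟨Nat.card G, ?_⟩
  rintro r ⟨E, -, -, h⟩
  have h1 : Nat.card E ≤ Nat.card G := Subgroup.card_le_card_group E
  exact (Nat.lt_pow_self hp.one_lt).le.trans (h ▸ h1)

theorem pRank_spec (p : ℕ) [Fact p.Prime] (G : Type) [Group G] [Finite G] :
    ∃ E : Subgroup G, (∀ x ∈ E, ∀ y ∈ E, x * y = y * x) ∧
    (∀ x ∈ E, x ^ p = 1) ∧ Nat.card E = p ^ (pRank p G) := by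
  refine Nat.sSup_mem (s := {r : ℕ | ∃ E : Subgroup G, (∀ x ∈ E, ∀ y ∈ E, x * y = y * x) ∧
    (∀ x ∈ E, x ^ p = 1) ∧ Nat.card E = p ^ r}) ⟨0, ⊥, ?_, ?_, ?_⟩ (pRank_bdd p G)
  · rintro x hx y hy
    rw [Subgroup.mem_bot] at hx hy
    rw [hx, hy]
  · rintro x hx
    rw [Subgroup.mem_bot] at hx
    rw [hx, one_pow]
  · simp

/-- An elementary abelian group embedding in `G` bounds the `p`-rank below. -/
theorem le_pRank (p : ℕ) [Fact p.Prime] {E G : Type} [Group E] [Group G] [Finite G]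
    (hc : ∀ x y : E, x * y = y * x) (he : ∀ x : E, x ^ p = 1) (r : ℕ) (hr : Nat.card E = p ^ r)
    (f : E →* G) (hf : Function.Injective f) : r ≤ pRank p G := by
  refine le_csSup (pRank_bdd p G) ⟨f.range, ?_, ?_, ?_⟩
  · rintro _ ⟨x, rfl⟩ _ ⟨y, rfl⟩
    rw [← map_mul, hc, map_mul]
  · rintro _ ⟨x, rfl⟩
    rw [← map_pow, he, map_one]
  · rw [← hr]
    exact (Nat.card_congr (f.ofInjective hf).toEquiv).symm

theorem bij_of_embed (p : ℕ) [Fact p.Prime] {H G : Type} [Group H] [Group G]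
    (φ : H →* G) (n : ℕ)
    (hbij : ∀ (A : Type) [Group A] [Finite A], IsPGroup p A →
      (∀ a b : A, a * b = b * a) → genRank A = n →
      Function.Bijective (GroupRep.map (A := A) φ))
    (A : Type) [CommGroup A] [Finite A] (hA : IsPGroup p A) {K : Type} [Group K] [Finite K]
    (hK : pRank p K ≤ n) (i : A →* K) (hi : Function.Injective i) : Bij φ A := by
  obtain ⟨d, hd⟩ := (IsPGroup.iff_card (p := p)).1 (hA.to_subgroup (powMonoidHom p : A →* A).ker)
  refine bij_of_card p φ n hbij A hA d (le_trans ?_ hK) hd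
  refine le_pRank p (fun x y => mul_comm x y) (fun x => Subtype.ext x.2) d hd
    (i.comp (Subgroup.subtype _)) ?_
  exact hi.comp Subtype.val_injective

theorem isPGroup_of_pow {p : ℕ} {E : Type} [Group E] (he : ∀ x : E, x ^ p = 1) : IsPGroup p E :=
  fun x => ⟨1, by rw [pow_one]; exact he x⟩

/-- `φ` has no nontrivial `p`-elements in its kernel. -/
theorem ker_trivial (p : ℕ) [Fact p.Prime] {H G : Type} [Group H] [Group G]
    (φ : H →* G) (n : ℕ) (hn : 1 ≤ n)
    (hbij : ∀ (A : Type) [Group A] [Finite A], IsPGroup p A →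
      (∀ a b : A, a * b = b * a) → genRank A = n →
      Function.Bijective (GroupRep.map (A := A) φ)) :
    ∀ (k : ℕ) (x : H), x ^ p ^ k = 1 → φ x = 1 → x = 1 := by
  have hp : p.Prime := Fact.out
  have : NeZero p := ⟨hp.ne_zero⟩
  have h1 : ∀ x : H, x ^ p = 1 → φ x = 1 → x = 1 := by
    intro x hx hφ
    by_contra hne
    have ho : orderOf x = p := orderOf_eq_prime hx hne
    let A := Subgroup.zpowers x
    let : CommGroup A :=
      { (inferInstance : Group A) with
        mul_comm := by
          rintro ⟨_, a, rfl⟩ ⟨_, b, rfl⟩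
          exact Subtype.ext (zpow_mul_comm x a b) }
    have hcA : Nat.card A = p := by rw [Nat.card_zpowers, ho]
    have : Finite A := Nat.finite_of_card_ne_zero (by rw [hcA]; exact hp.ne_zero)
    have he : ∀ a : A, a ^ p = 1 := fun a => by rw [← hcA]; exact pow_card_eq_one'
    have hker : (powMonoidHom p : A →* A).ker = ⊤ := by
      rw [eq_top_iff]; intro a _; exact he a
    have hB : Bij φ A := bij_of_card p φ n hbij A (isPGroup_of_pow he) 1 hn (by
      rw [hker, Subgroup.card_top, hcA, pow_one])
    obtain ⟨h, hh⟩ := hB.1 1 A.subtype ⟨1, by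
      rintro ⟨a, m, rfl⟩
      simp [hφ]⟩
    have := hh ⟨x, Subgroup.mem_zpowers x⟩
    apply hne
    simpa using this
  intro k
  induction k with
  | zero => intro x hx _; simpa using hx
  | succ k ih =>
    intro x hx hφ
    apply ih x _ hφ
    apply h1
    · rw [← pow_mul, ← pow_succ, hx]
    · rw [map_pow, hφ, one_pow]

end RepAux

/-- **Bijectivity on `Rep` for one sufficiently large rank implies it for all ranks.**
If `n ≥ 1`, `n ≥ min{rk_p(G), rk_p(H) + 1}`, and `φ : H → G` induces a bijection
`Rep(A,H) → Rep(A,G)` for every finite abelian `p`-group `A` of rank exactly `n`,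
then `rk_p(G) = rk_p(H)` and `φ` induces such a bijection for every finite abelian
`p`-group `A`. -/
theorem rep_bijective_of_rep_bijective_of_rank_eq
    (p : ℕ) [Fact p.Prime] (H G : Type) [Group H] [Group G] [Finite H] [Finite G]
    (φ : H →* G) (n : ℕ) (hn : 1 ≤ n) (hmin : min (pRank p G) (pRank p H + 1) ≤ n)
    (hbij : ∀ (A : Type) [Group A] [Finite A], IsPGroup p A →
      (∀ a b : A, a * b = b * a) → genRank A = n →
      Function.Bijective (GroupRep.map (A := A) φ)) :
    pRank p G = pRank p H ∧
      ∀ (A : Type) [Group A] [Finite A], IsPGroup p A →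
        (∀ a b : A, a * b = b * a) →
        Function.Bijective (GroupRep.map (A := A) φ) := by
  classical
  have hp : p.Prime := Fact.out
  have hker := RepAux.ker_trivial p φ n hn hbij
  have hHG : pRank p H ≤ pRank p G := by
    obtain ⟨E, hc, he, hE⟩ := RepAux.pRank_spec p H
    refine RepAux.le_pRank p (E := E) (fun x y => Subtype.ext (hc x x.2 y y.2))
      (fun x => Subtype.ext (he x x.2)) _ hE (φ.comp E.subtype) ?_
    rw [injective_iff_map_eq_one]
    intro x hx
    exact Subtype.ext (hker 1 x (by rw [pow_one]; exact he x x.2) hx)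
  have hGH : pRank p G ≤ pRank p H := by
    obtain ⟨E, hc, he, hE⟩ := RepAux.pRank_spec p G
    obtain ⟨m, hm⟩ : ∃ m, m = min (pRank p G) (pRank p H + 1) := ⟨_, rfl⟩
    obtain ⟨F, hF⟩ := Sylow.exists_subgroup_card_pow_prime (G := E) p (n := m)
      (by rw [hE]; exact pow_dvd_pow p (hm ▸ min_le_left _ _))
    let : CommGroup F :=
      { (inferInstance : Group F) with
        mul_comm := fun x y => Subtype.ext (Subtype.ext (hc x.1 x.1.2 y.1 y.1.2)) }
    have heF : ∀ x : F, x ^ p = 1 := fun x => Subtype.ext (Subtype.ext (he x.1 x.1.2))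
    have hkt : (powMonoidHom p : F →* F).ker = ⊤ := by
      rw [eq_top_iff]; intro a _; exact heF a
    have hB : RepAux.Bij φ F := RepAux.bij_of_card p φ n hbij F (RepAux.isPGroup_of_pow heF) m
      (hm ▸ hmin) (by rw [hkt, Subgroup.card_top, hF])
    obtain ⟨f', g, hg⟩ := hB.2 (E.subtype.comp F.subtype)
    have hmH : m ≤ pRank p H := by
      refine RepAux.le_pRank p (fun x y => mul_comm x y) heF m hF f' ?_
      rw [injective_iff_map_eq_one]
      intro x hx
      have := hg x
      rw [hx, map_one, mul_one, mul_inv_cancel] at this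
      exact Subtype.ext (Subtype.ext this)
    omega
  have hHn : pRank p H ≤ n := by omega
  have hGn : pRank p G ≤ n := by omega
  refine ⟨le_antisymm hGH hHG, ?_⟩
  intro A _ _ hA hcomm
  rw [RepAux.bij_iff]
  let : CommGroup A := { ‹Group A› with mul_comm := hcomm }
  refine ⟨fun f f' ⟨g, hg⟩ => ?_, fun f => ?_⟩
  · have hk : ∀ (f : A →* H) (a : A), φ (f a) = 1 → f a = 1 := by
      intro f a h
      obtain ⟨k, hk⟩ := hA a
      exact hker k (f a) (by rw [← map_pow, hk, map_one]) h
    have hle : f.ker ≤ f'.ker := by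
      intro a ha
      have ha : f a = 1 := ha
      apply hk f' a
      rw [hg a, ha]
      simp
    have hB : RepAux.Bij φ (A ⧸ f.ker) :=
      RepAux.bij_of_embed p φ n hbij (A ⧸ f.ker) (hA.to_quotient _) hHn
        (QuotientGroup.kerLift f) (QuotientGroup.kerLift_injective f)
    obtain ⟨h, hh⟩ := hB.1 (QuotientGroup.kerLift f) (QuotientGroup.lift f.ker f' hle) ⟨g, by
      intro x
      obtain ⟨a, rfl⟩ := QuotientGroup.mk_surjective x
      exact hg a⟩
    exact ⟨h, fun a => hh (a : A ⧸ f.ker)⟩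
  · have hB : RepAux.Bij φ (A ⧸ f.ker) :=
      RepAux.bij_of_embed p φ n hbij (A ⧸ f.ker) (hA.to_quotient _) hGn
        (QuotientGroup.kerLift f) (QuotientGroup.kerLift_injective f)
    obtain ⟨f', g, hg⟩ := hB.2 (QuotientGroup.kerLift f)
    exact ⟨f'.comp (QuotientGroup.mk' f.ker), g, fun a => hg (a : A ⧸ f.ker)⟩
end
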